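/- Let Ω ⊆ ℝⁿ be a C¹ domain, let a ∈ C¹([0,∞)) satisfy a(t) > 0 and (t·a(t))′ > 0 for all t ≥ 0, let f ∈ C¹(ℝ), and let u ∈ C²(Ω) ∩ C¹(cl Ω) be a non-constant stable weak solution of Δ_a u + f(u) = 0 in Ω. Let Ω₀ ⊆ Ω be a nonempty open connected set with ∂Ω₀ ⊆ ∂Ω ∪ crit(u), and let e ∈ ℝⁿ be such that ⟨∇u, e⟩ ≥ 0 at every point of (cl Ω₀) ∩ ∂Ω and ⟨∇u, e⟩ does not vanish identically on (cl Ω₀) ∩ ∂Ω. If u has moderate energy growth in Ω₀, then ⟨∇u, e⟩ > 0 at every point of Ω₀. -/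

import Mathlib

open MeasureTheory Set Metric Filter
open scoped RealInnerProductSpace Topology ENNReal

noncomputable section

variable {n : ℕ}

/-- The quasilinear operator matrix `A(p)` applied to a vector `v`:
`A(p)v = a(|p|) v + (a'(|p|)/|p|) ⟨p,v⟩ p` (with the second term vanishing at `p = 0`). -/
def Aop (a : ℝ → ℝ) (p v : EuclideanSpace ℝ (Fin n)) : EuclideanSpace ℝ (Fin n) :=
  a ‖p‖ • v + ((deriv a ‖p‖ / ‖p‖) * ⟪p, v⟫) • p

/-- `λ₁(t) = a(t) + t·a'(t) = (t a(t))'`. -/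
def lam1 (a : ℝ → ℝ) (t : ℝ) : ℝ := a t + t * deriv a t

/-- `λ₂(t) = a(t)`. -/
def lam2 (a : ℝ → ℝ) (t : ℝ) : ℝ := a t

/-- `λmax(t) = max{λ₁(t), λ₂(t)}`. -/
def lamMax (a : ℝ → ℝ) (t : ℝ) : ℝ := max (lam1 a t) (lam2 a t)

/-- A Lipschitz test function with compact support contained in `Ω`. -/
def IsTestOn (Ω : Set (EuclideanSpace ℝ (Fin n))) (φ : EuclideanSpace ℝ (Fin n) → ℝ) : Prop :=
  (∃ K, LipschitzWith K φ) ∧ HasCompactSupport φ ∧ tsupport φ ⊆ Ω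

/-- `u` is a weak solution of `div(a(|∇u|)∇u) + f(u) = 0` in `Ω`. -/
def IsWeakSolution (a f : ℝ → ℝ) (Ω : Set (EuclideanSpace ℝ (Fin n)))
    (u : EuclideanSpace ℝ (Fin n) → ℝ) : Prop :=
  ∀ φ : EuclideanSpace ℝ (Fin n) → ℝ, IsTestOn Ω φ →
    ∫ x in Ω, a ‖gradient u x‖ * ⟪gradient u x, gradient φ x⟫
      = ∫ x in Ω, f (u x) * φ x

/-- The stability inequality for a solution `u`. -/
def IsStable (a f : ℝ → ℝ) (Ω : Set (EuclideanSpace ℝ (Fin n)))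
    (u : EuclideanSpace ℝ (Fin n) → ℝ) : Prop :=
  ∀ φ : EuclideanSpace ℝ (Fin n) → ℝ, IsTestOn Ω φ →
    ∫ x in Ω, deriv f (u x) * φ x ^ 2
      ≤ ∫ x in Ω, ⟪Aop a (gradient u x) (gradient φ x), gradient φ x⟫

/-- `u` has moderate energy growth in `Ω₀`. -/
def ModerateEnergyGrowth (a : ℝ → ℝ) (u : EuclideanSpace ℝ (Fin n) → ℝ)
    (Ω₀ : Set (EuclideanSpace ℝ (Fin n))) : Prop :=
  ∃ φ : ℕ → EuclideanSpace ℝ (Fin n) → ℝ,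
    (∀ j, ∃ K, LipschitzWith K (φ j)) ∧
    (∀ j, HasCompactSupport (φ j)) ∧
    (∀ j x, 0 ≤ φ j x) ∧
    (∀ K : Set (EuclideanSpace ℝ (Fin n)), IsCompact K → K ⊆ closure Ω₀ →
      TendstoUniformlyOn (fun j => φ j) (fun _ => (1 : ℝ)) atTop K) ∧
    Tendsto (fun j => ∫ x in Ω₀, ‖gradient u x‖ ^ 2 *
        ⟪Aop a (gradient u x) (gradient (φ j) x), gradient (φ j) x⟫)
      atTop (nhds 0)

/-- A `C^k` domain: nonempty, open, connected, with boundary locally given by a regular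
`C^k` defining function. -/
def IsCkDomain (k : ℕ∞) (Ω : Set (EuclideanSpace ℝ (Fin n))) : Prop :=
  Ω.Nonempty ∧ IsOpen Ω ∧ IsConnected Ω ∧
    ∀ p ∈ frontier Ω, ∃ V : Set (EuclideanSpace ℝ (Fin n)),
      ∃ g : EuclideanSpace ℝ (Fin n) → ℝ,
        IsOpen V ∧ p ∈ V ∧ ContDiffOn ℝ k g V ∧ (∀ x ∈ V, gradient g x ≠ 0) ∧
        Ω ∩ V = {x ∈ V | g x < 0}

/-- A `C^k` domain together with its interior unit normal field `η`. -/
def IsCkDomainWithNormal (k : ℕ∞) (Ω : Set (EuclideanSpace ℝ (Fin n)))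
    (η : EuclideanSpace ℝ (Fin n) → EuclideanSpace ℝ (Fin n)) : Prop :=
  Ω.Nonempty ∧ IsOpen Ω ∧ IsConnected Ω ∧
    ∀ p ∈ frontier Ω, ∃ V : Set (EuclideanSpace ℝ (Fin n)),
      ∃ g : EuclideanSpace ℝ (Fin n) → ℝ,
        IsOpen V ∧ p ∈ V ∧ ContDiffOn ℝ k g V ∧ (∀ x ∈ V, gradient g x ≠ 0) ∧
        Ω ∩ V = {x ∈ V | g x < 0} ∧
        η p = -(‖gradient g p‖⁻¹ • gradient g p)

/-- `a ∈ C^{1,1}_loc([0,∞))`: `C¹` on `[0,∞)` with locally Lipschitz derivative. -/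
def C11Loc (a : ℝ → ℝ) : Prop :=
  ContDiffOn ℝ 1 a (Ici 0) ∧
    ∀ t ∈ Ici (0 : ℝ), ∃ V ∈ 𝓝[Ici (0 : ℝ)] t, ∃ K, LipschitzOnWith K (deriv a) V

/-! The directional derivative `w = ⟨∇u, e⟩` solves the linearized equation
`div (A ∇w) + f'(u) w = 0`, where `A = A(∇u)`. Its negative part `v` in `Ω₀`, extended by zero to
`Ω`, is locally Lipschitz, because `w ≥ 0` on `∂Ω₀` (by assumption on `∂Ω`, and since `∇u = 0`
elsewhere), and `v ≤ |e| |∇u|`. Let `φ_j` be the cutoff functions of the moderate energy growth.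
Testing the equation for `v` in `{v > 0}` with `φ_j² v` makes the stability form of `φ_j v` at most
`2 ∫ v² ⟨A ∇φ_j, ∇φ_j⟩`, which tends to `0`. So stability at `φ_j v + t ξ` gives, as `j → ∞` and
then `t ↓ 0`, that `v` is a supersolution in all of `Ω`. If `v` were positive somewhere, then, by
the strong maximum principle, `v > 0` throughout `Ω`; but `w > 0` at some point of `Ω₀`, close to a
boundary point where `⟨∇u, e⟩ > 0`. Hence `w ≥ 0` in `Ω₀`, and the strong maximum principle for `w`
in `Ω₀` gives `w > 0`.

The strong maximum principle is proved for Lipschitz supersolutions `v ≥ 0` with continuous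
coefficients: testing with `η² / (v + ε)` bounds the gradient of `log (v + ε)` uniformly in `ε`,
which forces `{v = 0}` to be a null set near points where `v > 0`; De Giorgi iteration then turns
smallness of the sublevel sets into a positive lower bound. -/

local notation "𝔼" n:max => EuclideanSpace ℝ (Fin n)

/-! ### Locally Lipschitz functions -/

section LocallyLipschitz

theorem inter_frontier_nonempty_of_isPreconnected {X : Type*} [TopologicalSpace X] {s t : Set X}
    (ht : IsPreconnected t) {x y : X} (hx : x ∈ t ∩ s) (hy : y ∈ t \ s) :
    (t ∩ frontier s).Nonempty := by
  by_contra hne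
  have hf : ∀ z ∈ t, z ∉ frontier s := fun z hz hzs => hne ⟨z, hz, hzs⟩
  have hint : ∀ z ∈ t ∩ s, z ∈ interior s := fun z hz =>
    by_contra fun h => hf z hz.1 ⟨subset_closure hz.2, h⟩
  have hext : ∀ z ∈ t \ s, z ∈ (closure s)ᶜ := fun z hz h =>
    hf z hz.1 ⟨h, fun h' => hz.2 (interior_subset h')⟩
  obtain ⟨z, -, hz, hz'⟩ := ht _ _ isOpen_interior isClosed_closure.isOpen_compl
    (fun z hz => (em (z ∈ s)).imp (fun h => hint z ⟨hz, h⟩) fun h => hext z ⟨hz, h⟩)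
    ⟨x, hx.1, hint x hx⟩ ⟨y, hy.1, hext y hy⟩
  exact hz' (subset_closure (interior_subset hz))

open scoped NNReal

theorem locallyLipschitzOn_of_lipschitzOnWith {X Y : Type*} [PseudoEMetricSpace X]
    [PseudoEMetricSpace Y] {s : Set X} {f : X → Y} {K : ℝ≥0} (hf : LipschitzOnWith K f s) :
    LocallyLipschitzOn s f :=
  fun _ _ => ⟨K, s, self_mem_nhdsWithin, hf⟩

theorem locallyLipschitzOn_comp {X E F : Type*} [PseudoEMetricSpace X] [NormedAddCommGroup E]
    [NormedSpace ℝ E] [NormedAddCommGroup F] [NormedSpace ℝ F] {s : Set X} {f : X → E} {g : E → F}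
    (hg : ∀ x ∈ s, ContDiffAt ℝ 1 g (f x)) (hf : LocallyLipschitzOn s f) :
    LocallyLipschitzOn s (g ∘ f) := by
  intro x hx
  obtain ⟨Kg, t, ht, hgt⟩ := (hg x hx).exists_lipschitzOnWith
  obtain ⟨Kf, t', ht', hft⟩ := hf hx
  exact ⟨Kg * Kf, f ⁻¹' t ∩ t', inter_mem (hf.continuousOn x hx ht) ht',
    hgt.comp (hft.mono inter_subset_right) fun y hy => hy.1⟩

theorem locallyLipschitzOn_mul {X : Type*} [PseudoEMetricSpace X] {s : Set X} {f g : X → ℝ}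
    (hf : LocallyLipschitzOn s f) (hg : LocallyLipschitzOn s g) :
    LocallyLipschitzOn s fun x => f x * g x := by
  have hfg : LocallyLipschitzOn s fun x => (f x, g x) := by
    intro x hx
    obtain ⟨Kf, t, ht, hft⟩ := hf hx
    obtain ⟨Kg, t', ht', hgt⟩ := hg hx
    refine ⟨max Kf Kg, t ∩ t', inter_mem ht ht', fun y hy z hz => ?_⟩
    rw [Prod.edist_eq, ENNReal.coe_mono.map_max, max_mul]
    exact max_le_max (hft hy.1 hz.1) (hgt hy.2 hz.2)
  exact locallyLipschitzOn_comp (g := fun p : ℝ × ℝ => p.1 * p.2)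
    (fun _ _ => (contDiff_fst.mul contDiff_snd).contDiffAt) hfg

theorem locallyLipschitzOn_max {X : Type*} [PseudoEMetricSpace X] {s : Set X} {f g : X → ℝ}
    (hf : LocallyLipschitzOn s f) (hg : LocallyLipschitzOn s g) :
    LocallyLipschitzOn s fun x => max (f x) (g x) := by
  rw [locallyLipschitzOn_iff_restrict] at *
  exact hf.max hg

variable {E : Type*} [NormedAddCommGroup E] [NormedSpace ℝ E]

theorem lipschitzOnWith_indicator {S B : Set E} {f : E → ℝ} {K : ℝ≥0} (hB : Convex ℝ B)
    (hf : LipschitzOnWith K f (B ∩ closure S)) (h0 : ∀ x ∈ B ∩ frontier S, f x = 0) :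
    LipschitzOnWith K (S.indicator f) B := by
  refine LipschitzOnWith.of_dist_le_mul fun x hx y hy => ?_
  wlog hxS : x ∈ S generalizing x y
  · by_cases hyS : y ∈ S
    · simpa only [dist_comm] using this y hy x hx hyS
    · rw [indicator_of_notMem hxS, indicator_of_notMem hyS, dist_self]
      positivity
  rw [indicator_of_mem hxS]
  by_cases hyS : y ∈ S
  · rw [indicator_of_mem hyS]
    exact hf.dist_le_mul x ⟨hx, subset_closure hxS⟩ y ⟨hy, subset_closure hyS⟩
  obtain ⟨z, hz, hzS⟩ : (segment ℝ x y ∩ frontier S).Nonempty :=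
    inter_frontier_nonempty_of_isPreconnected (convex_segment x y).isPreconnected
      ⟨left_mem_segment ℝ x y, hxS⟩ ⟨right_mem_segment ℝ x y, hyS⟩
  have hzB := hB.segment_subset hx hy hz
  rw [indicator_of_notMem hyS, ← h0 z ⟨hzB, hzS⟩]
  refine (hf.dist_le_mul x ⟨hx, subset_closure hxS⟩ z ⟨hzB, frontier_subset_closure hzS⟩).trans ?_
  have := dist_add_dist_of_mem_segment hz
  gcongr
  linarith [dist_nonneg (x := z) (y := y)]

theorem exists_lipschitzWith_of_tsupport_subset {U : Set E} {f : E → ℝ}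
    (hU : IsOpen U) (hf : LocallyLipschitzOn U f) (hc : HasCompactSupport f)
    (hfU : tsupport f ⊆ U) : ∃ K, LipschitzWith K f := by
  obtain ⟨K, hK⟩ := (hf.mono hfU).exists_lipschitzOnWith_of_compact hc
  refine ⟨K, ?_⟩
  rw [← lipschitzOnWith_univ, ← indicator_support (f := f)]
  refine lipschitzOnWith_indicator convex_univ (by rwa [univ_inter]) fun x hx => ?_
  by_contra hfx
  have hxU := hU.mem_nhds (hfU (frontier_subset_closure hx.2))
  exact hx.2.2 (mem_interior_iff_mem_nhds.2 <|
    (hf.continuousOn.continuousAt hxU).eventually_ne hfx)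

end LocallyLipschitz

/-! ### A Poincaré inequality -/

section Translation

open scoped NNReal

theorem enorm_sub_le_lintegral_enorm_deriv {γ : ℝ → ℝ} {K : ℝ≥0}
    (hγ : LipschitzOnWith K γ (Icc 0 1)) :
    ‖γ 1 - γ 0‖ₑ ≤ ∫⁻ t in Icc (0 : ℝ) 1, ‖deriv γ t‖ₑ := by
  rw [← uIcc_of_le zero_le_one] at hγ
  rw [← hγ.absolutelyContinuousOnInterval.integral_deriv_eq_sub,
    intervalIntegral.integral_of_le zero_le_one, ← integral_Icc_eq_integral_Ioc]
  exact enorm_integral_le_lintegral_enorm _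

variable {E : Type*} [NormedAddCommGroup E] [NormedSpace ℝ E] {g : E → ℝ} {B : Set E} {K : ℝ≥0}

theorem enorm_add_sub_le_lintegral_fderiv (hBc : Convex ℝ B)
    (hg : LipschitzOnWith K g B) {x h : E} (hx : x ∈ B) (hxh : x + h ∈ B)
    (hd : ∀ᵐ t : ℝ, x + t • h ∈ B → DifferentiableAt ℝ g (x + t • h)) :
    ‖g (x + h) - g x‖ₑ ≤ ∫⁻ t in Icc (0 : ℝ) 1, ‖h‖ₑ * ‖fderiv ℝ g (x + t • h)‖ₑ := by
  have hmem : ∀ t ∈ Icc (0 : ℝ) 1, x + t • h ∈ B := fun t ht => hBc.add_smul_mem hx hxh ht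
  have hline : ∀ t : ℝ, HasDerivAt (fun t : ℝ => x + t • h) h t := fun t => by
    simpa using ((hasDerivAt_id t).smul_const h).const_add x
  have hlip : LipschitzWith ‖h‖₊ fun t : ℝ => x + t • h :=
    LipschitzWith.of_dist_le_mul fun s t => by
      rw [dist_add_left, dist_eq_norm, ← sub_smul, norm_smul, mul_comm, dist_eq_norm, coe_nnnorm]
  have key := enorm_sub_le_lintegral_enorm_deriv
    (hg.comp (hlip.lipschitzOnWith (s := Icc 0 1)) hmem)
  simp only [Function.comp_apply, one_smul, zero_smul, add_zero] at key
  refine key.trans (setLIntegral_mono_ae' measurableSet_Icc ?_)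
  filter_upwards [hd] with t htd ht
  have hderiv := ((htd (hmem t ht)).hasFDerivAt.comp_hasDerivAt t (hline t)).deriv
  rw [hderiv, mul_comm]
  exact (fderiv ℝ g (x + t • h)).le_opENorm h

variable [FiniteDimensional ℝ E] [MeasurableSpace E] [BorelSpace E] {μ : Measure E}
  [μ.IsAddHaarMeasure]

theorem ae_ae_differentiableAt_add_smul (hB : IsOpen B) (hg : LipschitzOnWith K g B) (h : E) :
    ∀ᵐ x ∂μ, ∀ᵐ t : ℝ, x + t • h ∈ B → DifferentiableAt ℝ g (x + t • h) := by
  have hmeas : MeasurableSet {y | y ∈ B → DifferentiableAt ℝ g y} := by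
    simp only [imp_iff_not_or]
    exact hB.measurableSet.compl.union (measurableSet_of_differentiableAt ℝ g)
  rw [Measure.ae_ae_comm (p := fun x (t : ℝ) => x + t • h ∈ B → DifferentiableAt ℝ g (x + t • h))
    ((by fun_prop : Measurable fun p : E × ℝ => p.1 + p.2 • h) hmeas)]
  refine Eventually.of_forall fun t =>
    (measurePreserving_add_right μ (t • h)).quasiMeasurePreserving.ae
      (p := fun y => y ∈ B → DifferentiableAt ℝ g y) ?_
  filter_upwards [hg.ae_differentiableWithinAt_of_mem (μ := μ)] with y hy hyB
  exact (hy hyB).differentiableAt (hB.mem_nhds hyB)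

theorem lintegral_enorm_add_sub_le (hB : IsOpen B) (hBc : Convex ℝ B)
    (hg : LipschitzOnWith K g B) {A : Set E} {h : E} (hA : MeasurableSet A) (hAB : A ⊆ B)
    (hAh : ∀ x ∈ A, x + h ∈ B) :
    ∫⁻ x in A, ‖g (x + h) - g x‖ₑ ∂μ ≤ ‖h‖ₑ * ∫⁻ x in B, ‖fderiv ℝ g x‖ₑ ∂μ := by
  set F : E → ℝ≥0∞ := fun y => ‖h‖ₑ * ‖fderiv ℝ g y‖ₑ
  have hF : Measurable F := ((measurable_fderiv ℝ g).enorm).const_mul _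
  calc ∫⁻ x in A, ‖g (x + h) - g x‖ₑ ∂μ
      ≤ ∫⁻ x in A, (∫⁻ t in Icc (0 : ℝ) 1, F (x + t • h)) ∂μ := by
        refine setLIntegral_mono_ae' hA ?_
        filter_upwards [ae_ae_differentiableAt_add_smul (μ := μ) hB hg h] with x hx hxA
        exact enorm_add_sub_le_lintegral_fderiv hBc hg (hAB hxA) (hAh x hxA) hx
    _ = ∫⁻ t in Icc (0 : ℝ) 1, ∫⁻ x in A, F (x + t • h) ∂μ :=
        lintegral_lintegral_swap
          (hF.comp (by fun_prop : Measurable fun p : E × ℝ => p.1 + p.2 • h)).aemeasurable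
    _ ≤ ∫⁻ _ in Icc (0 : ℝ) 1, ∫⁻ x in B, F x ∂μ := by
        refine setLIntegral_mono' measurableSet_Icc fun t ht => ?_
        rw [← lintegral_indicator hA, ← lintegral_indicator hB.measurableSet,
          ← lintegral_add_right_eq_self (B.indicator F) (t • h)]
        refine lintegral_mono fun x => indicator_apply_le' (fun hx => ?_) fun _ => zero_le
        rw [indicator_of_mem (hBc.add_smul_mem (hAB hx) (hAh x hx) ht)]
    _ = ‖h‖ₑ * ∫⁻ x in B, ‖fderiv ℝ g x‖ₑ ∂μ := by
        rw [setLIntegral_const, Real.volume_Icc, sub_zero, ENNReal.ofReal_one, mul_one,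
          lintegral_const_mul' _ _ enorm_ne_top]

theorem measure_ball_mul_enorm_le_lintegral (hg : Continuous g) {ρ : ℝ}
    (hsupp : 2 * μ (Function.support g) ≤ μ (ball 0 ρ)) (x : E) :
    μ (ball 0 ρ) * ‖g x‖ₑ ≤ 2 * ∫⁻ h in ball 0 ρ, ‖g (x + h) - g x‖ₑ ∂μ := by
  set S := Function.support g
  set b := μ (ball 0 ρ)
  set T := ball 0 ρ \ {h | x + h ∈ S}
  have hS : MeasurableSet {h | x + h ∈ S} :=
    (hg.isOpen_support.preimage (by fun_prop : Continuous (x + ·))).measurableSet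
  have hT : b ≤ 2 * μ T := by
    have hball : b ≤ μ S + μ T := by
      rw [← measure_preimage_add μ x S]
      exact (measure_mono (sdiff_subset_iff.1 subset_rfl)).trans (measure_union_le _ _)
    have hdouble : 2 * b ≤ b + 2 * μ T :=
      (mul_le_mul_right hball 2).trans (by rw [mul_add]; gcongr)
    rw [two_mul] at hdouble
    exact (ENNReal.add_le_add_iff_left measure_ball_lt_top.ne).1 hdouble
  calc b * ‖g x‖ₑ ≤ 2 * (‖g x‖ₑ * μ T) := by rw [mul_left_comm, mul_comm]; gcongr
    _ = 2 * ∫⁻ h in T, ‖g (x + h) - g x‖ₑ ∂μ := by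
        rw [← setLIntegral_const]
        congr 1
        refine setLIntegral_congr_fun (measurableSet_ball.diff hS) fun h hh => ?_
        have : g (x + h) = 0 := Function.notMem_support.1 hh.2
        simp [this]
    _ ≤ 2 * ∫⁻ h in ball 0 ρ, ‖g (x + h) - g x‖ₑ ∂μ := by gcongr; exact sdiff_subset

theorem lintegral_enorm_le_of_two_mul_measure_support_le (hg : LipschitzWith K g) {ρ : ℝ}
    (hρ : 0 < ρ) (hsupp : 2 * μ (Function.support g) ≤ μ (ball 0 ρ)) :
    ∫⁻ x, ‖g x‖ₑ ∂μ ≤ 2 * ENNReal.ofReal ρ * ∫⁻ x, ‖fderiv ℝ g x‖ₑ ∂μ := by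
  set b := μ (ball 0 ρ)
  set D := ∫⁻ x, ‖fderiv ℝ g x‖ₑ ∂μ
  have hb0 : b ≠ 0 := (measure_ball_pos μ 0 hρ).ne'
  have hbt : b ≠ ∞ := measure_ball_lt_top.ne
  have htranslate : ∀ h ∈ ball (0 : E) ρ,
      ∫⁻ x, ‖g (x + h) - g x‖ₑ ∂μ ≤ ENNReal.ofReal ρ * D := fun h hh => by
    have := lintegral_enorm_add_sub_le (μ := μ) (h := h) isOpen_univ convex_univ
      (lipschitzOnWith_univ.2 hg) MeasurableSet.univ subset_rfl fun _ _ => mem_univ _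
    rw [Measure.restrict_univ] at this
    refine this.trans ?_
    gcongr
    rw [← ofReal_norm]
    exact ENNReal.ofReal_le_ofReal (mem_ball_zero_iff.1 hh).le
  refine (ENNReal.mul_le_mul_iff_right hb0 hbt).1 ?_
  calc b * ∫⁻ x, ‖g x‖ₑ ∂μ = ∫⁻ x, b * ‖g x‖ₑ ∂μ := (lintegral_const_mul' _ _ hbt).symm
    _ ≤ ∫⁻ x, 2 * ∫⁻ h in ball 0 ρ, ‖g (x + h) - g x‖ₑ ∂μ ∂μ :=
        lintegral_mono (measure_ball_mul_enorm_le_lintegral hg.continuous hsupp)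
    _ = 2 * ∫⁻ h in ball 0 ρ, ∫⁻ x, ‖g (x + h) - g x‖ₑ ∂μ ∂μ := by
        rw [lintegral_const_mul' _ _ ENNReal.ofNat_ne_top,
          lintegral_lintegral_swap (by have := hg.continuous; fun_prop)]
    _ ≤ 2 * ∫⁻ _ in ball (0 : E) ρ, ENNReal.ofReal ρ * D ∂μ := by
        gcongr 2 * ?_
        exact setLIntegral_mono' measurableSet_ball htranslate
    _ = b * (2 * ENNReal.ofReal ρ * D) := by rw [setLIntegral_const]; ring

theorem integrable_fderiv_of_lipschitzWith {K : ℝ≥0} {g : E → ℝ} (hg : LipschitzWith K g)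
    (hgc : HasCompactSupport g) {μ : Measure E} [IsFiniteMeasureOnCompacts μ] :
    Integrable (fderiv ℝ g) μ :=
  memLp_one_iff_integrable.1 <| (hgc.fderiv ℝ).memLp_of_bound
    (measurable_fderiv ℝ g).aestronglyMeasurable K
    (Eventually.of_forall fun _ => norm_fderiv_le_of_lipschitz ℝ hg)

theorem exists_integral_norm_le_rpow_mul_integral_norm_fderiv [Nontrivial E] (μ : Measure E)
    [μ.IsAddHaarMeasure] :
    ∃ C > 0, ∀ (K : ℝ≥0) (g : E → ℝ), LipschitzWith K g → HasCompactSupport g →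
      ∫ x, |g x| ∂μ ≤ C * μ.real (Function.support g) ^ (Module.finrank ℝ E : ℝ)⁻¹ *
        ∫ x, ‖fderiv ℝ g x‖ ∂μ := by
  set d := Module.finrank ℝ E
  have hd : d ≠ 0 := (Module.finrank_pos (R := ℝ) (M := E)).ne'
  set ω := μ.real (ball (0 : E) 1)
  have hω : 0 < ω := ENNReal.toReal_pos (measure_ball_pos μ 0 one_pos).ne' measure_ball_lt_top.ne
  refine ⟨2 * (2 / ω) ^ (d : ℝ)⁻¹, by positivity, fun K g hg hgc => ?_⟩
  set m := μ.real (Function.support g)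
  have hmt : μ (Function.support g) ≠ ∞ :=
    ((measure_mono subset_closure).trans_lt hgc.measure_lt_top).ne
  rcases (measureReal_nonneg : 0 ≤ m).eq_or_lt with hm | hm
  · have hg0 : ∀ᵐ x ∂μ, g x = 0 := by
      have := (measureReal_eq_zero_iff hmt).1 hm.symm
      filter_upwards [compl_mem_ae_iff.2 this] with x hx using Function.notMem_support.1 hx
    rw [integral_eq_zero_of_ae (hg0.mono fun x hx => by simp [hx])]
    positivity
  set ρ := (2 / ω * m) ^ (d : ℝ)⁻¹
  have hρ : 0 < ρ := by positivity
  have hsupp : 2 * μ (Function.support g) ≤ μ (ball 0 ρ) := by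
    rw [Measure.addHaar_ball_of_pos μ 0 hρ, Real.rpow_inv_natCast_pow (by positivity) hd,
      ← ofReal_measureReal hmt, ← ofReal_measureReal (measure_ball_lt_top (μ := μ)).ne,
      ← ENNReal.ofReal_mul (by positivity), ← ENNReal.ofReal_ofNat 2,
      ← ENNReal.ofReal_mul (by positivity)]
    exact ENNReal.ofReal_le_ofReal (by change 2 * m ≤ 2 / ω * m * ω; field_simp; rfl)
  have hfin := (integrable_fderiv_of_lipschitzWith (μ := μ) hg hgc).2.ne
  have key := ENNReal.toReal_mono (by finiteness)
    (lintegral_enorm_le_of_two_mul_measure_support_le hg hρ hsupp)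
  rw [ENNReal.toReal_mul, ENNReal.toReal_mul, ENNReal.toReal_ofReal hρ.le,
    ← integral_norm_eq_lintegral_enorm hg.continuous.aestronglyMeasurable,
    ← integral_norm_eq_lintegral_enorm (measurable_fderiv ℝ g).aestronglyMeasurable] at key
  refine key.trans_eq ?_
  rw [mul_assoc 2, ← Real.mul_rpow (by positivity) hm.le]
  rfl

end Translation

/-! ### Test functions -/

section Gradient

variable {E : Type*} [NormedAddCommGroup E] [InnerProductSpace ℝ E] [CompleteSpace E]
  {f g : E → ℝ} {x : E}

theorem norm_gradient (f : E → ℝ) (x : E) : ‖gradient f x‖ = ‖fderiv ℝ f x‖ :=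
  (InnerProductSpace.toDual ℝ E).symm.norm_map _

theorem gradient_eq_of_fderiv_apply {p : E} (h : ∀ y, fderiv ℝ f x y = ⟪p, y⟫) :
    gradient f x = p :=
  ext_inner_right ℝ fun y => by rw [inner_gradient_left, h]

theorem gradient_mul (hf : DifferentiableAt ℝ f x) (hg : DifferentiableAt ℝ g x) :
    gradient (fun x => f x * g x) x = f x • gradient g x + g x • gradient f x := by
  simp [gradient, fderiv_fun_mul hf hg]

theorem gradient_comp_deriv {G : ℝ → ℝ} (hG : DifferentiableAt ℝ G (f x))
    (hf : DifferentiableAt ℝ f x) :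
    gradient (fun x => G (f x)) x = deriv G (f x) • gradient f x := by
  have := (hG.hasDerivAt.comp_hasFDerivAt x hf.hasFDerivAt).fderiv
  rw [gradient, show (fun x => G (f x)) = G ∘ f from rfl, this, map_smul, gradient]

theorem gradient_of_notMem_tsupport (h : x ∉ tsupport f) : gradient f x = 0 := by
  rw [gradient, fderiv_of_notMem_tsupport ℝ h, map_zero]

theorem norm_gradient_le_of_lipschitzOnWith {s : Set E} {K : NNReal} (hs : s ∈ 𝓝 x)
    (hf : LipschitzOnWith K f s) : ‖gradient f x‖ ≤ K :=
  (norm_gradient f x).trans_le (norm_fderiv_le_of_lipschitzOn ℝ hs hf)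

theorem measurable_gradient [MeasurableSpace E] [BorelSpace E] (f : E → ℝ) :
    Measurable (gradient f) :=
  (InnerProductSpace.toDual ℝ E).symm.continuous.measurable.comp (measurable_fderiv ℝ f)

end Gradient

section BoundedOnCompact

variable {X F : Type*} [TopologicalSpace X] [MeasurableSpace X] {μ : Measure X}
  [NormedAddCommGroup F] {S : Set X} {f : X → F}

theorem integrable_of_memLp_top_restrict [IsFiniteMeasureOnCompacts μ] (hS : IsCompact S)
    (hf : MemLp f ∞ (μ.restrict S)) (h0 : ∀ x ∉ S, f x = 0) : Integrable f μ := by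
  have : IsFiniteMeasure (μ.restrict S) := isFiniteMeasure_restrict.2 hS.measure_ne_top
  exact IntegrableOn.integrable_of_forall_notMem_eq_zero (hf.integrable le_top) h0

theorem memLp_top_restrict_of_continuousOn [T2Space X] [BorelSpace X]
    [SecondCountableTopologyEither X F]
    (hS : IsCompact S) (hf : ContinuousOn f S) : MemLp f ∞ (μ.restrict S) := by
  obtain ⟨C, hC⟩ := hS.exists_bound_of_continuousOn hf
  exact memLp_top_of_bound (hf.aestronglyMeasurable hS.measurableSet) C
    ((ae_restrict_mem hS.measurableSet).mono hC)

end BoundedOnCompact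

section BoundedGradient

variable {E : Type*} [NormedAddCommGroup E] [InnerProductSpace ℝ E] [FiniteDimensional ℝ E]
  [MeasurableSpace E] [BorelSpace E] {μ : Measure E} {S U : Set E}

theorem memLp_top_gradient {v : E → ℝ} (hU : IsOpen U) (hv : LocallyLipschitzOn U v)
    (hS : IsCompact S) (hSU : S ⊆ U) : MemLp (gradient v) ∞ (μ.restrict S) := by
  obtain ⟨δ, hδ, hδU⟩ := hS.exists_cthickening_subset_open hU hSU
  obtain ⟨K, hK⟩ := (hv.mono hδU).exists_lipschitzOnWith_of_compact hS.cthickening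
  refine memLp_top_of_bound (measurable_gradient v).aestronglyMeasurable K ?_
  filter_upwards [ae_restrict_mem hS.measurableSet] with x hx
  exact norm_gradient_le_of_lipschitzOnWith
    (mem_of_superset (isOpen_thickening.mem_nhds (self_subset_thickening hδ S hx))
      (thickening_subset_cthickening δ S)) hK

theorem integrable_inner_clm_apply [IsFiniteMeasureOnCompacts μ] {A : E → E →L[ℝ] E}
    {p q : E → E} (hS : IsCompact S) (hA : ContinuousOn A S) (hp : MemLp p ∞ (μ.restrict S))
    (hq : MemLp q ∞ (μ.restrict S)) (h0 : ∀ x ∉ S, q x = 0) :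
    Integrable (fun x => ⟪A x (p x), q x⟫) μ := by
  have hAp := (ContinuousLinearMap.id ℝ (E →L[ℝ] E)).memLp_of_bilin ∞
    (memLp_top_restrict_of_continuousOn (μ := μ) hS hA) hp
  refine integrable_of_memLp_top_restrict hS ((innerSL ℝ).memLp_of_bilin ∞ hAp hq) fun x hx => ?_
  rw [h0 x hx]
  exact inner_zero_right _

end BoundedGradient

section TestFunctions

theorem isTestOn_of_locallyLipschitzOn {U : Set (𝔼 n)}
    {ξ : 𝔼 n → ℝ} (hU : IsOpen U) (hξ : LocallyLipschitzOn U ξ)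
    (hc : HasCompactSupport ξ) (hξU : tsupport ξ ⊆ U) : IsTestOn U ξ :=
  ⟨exists_lipschitzWith_of_tsupport_subset hU hξ hc hξU, hc, hξU⟩

namespace IsTestOn

variable {U V : Set (𝔼 n)} {ξ η : 𝔼 n → ℝ}

theorem mono (hξ : IsTestOn U ξ) (h : U ⊆ V) : IsTestOn V ξ :=
  ⟨hξ.1, hξ.2.1, hξ.2.2.trans h⟩

theorem locallyLipschitz (hξ : IsTestOn U ξ) : LocallyLipschitz ξ :=
  let ⟨_, hK⟩ := hξ.1
  hK.locallyLipschitz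

theorem ae_differentiableAt (hξ : IsTestOn U ξ) : ∀ᵐ x, DifferentiableAt ℝ ξ x :=
  let ⟨_, hK⟩ := hξ.1
  hK.ae_differentiableAt

theorem mul_locallyLipschitzOn (hξ : IsTestOn U ξ) (hU : IsOpen U)
    {f : 𝔼 n → ℝ} (hf : LocallyLipschitzOn U f) :
    IsTestOn U fun x => ξ x * f x :=
  isTestOn_of_locallyLipschitzOn hU
    (locallyLipschitzOn_mul hξ.locallyLipschitz.locallyLipschitzOn hf) hξ.2.1.mul_right
    ((tsupport_mul_subset_left (f := ξ) (g := f)).trans hξ.2.2)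

theorem memLp_top_gradient (hξ : IsTestOn U ξ) (S : Set (𝔼 n)) :
    MemLp (gradient ξ) ∞ (volume.restrict S) :=
  let ⟨K, hK⟩ := hξ.1
  memLp_top_of_bound (measurable_gradient ξ).aestronglyMeasurable K (Eventually.of_forall fun _ =>
    norm_gradient_le_of_lipschitzOnWith univ_mem (lipschitzOnWith_univ.2 hK))

theorem integrable_inner_gradient
    {A : 𝔼 n → 𝔼 n →L[ℝ] 𝔼 n} {v : 𝔼 n → ℝ} (hξ : IsTestOn U ξ) (hU : IsOpen U)
    (hA : ContinuousOn A U) (hv : LocallyLipschitzOn U v) :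
    Integrable fun x => ⟪A x (gradient v x), gradient ξ x⟫ :=
  integrable_inner_clm_apply hξ.2.1 (hA.mono hξ.2.2) (_root_.memLp_top_gradient hU hv hξ.2.1 hξ.2.2)
    (hξ.memLp_top_gradient _) fun _ => gradient_of_notMem_tsupport

theorem integrable_mul {h : 𝔼 n → ℝ} (hξ : IsTestOn U ξ)
    (hh : ContinuousOn h U) : Integrable fun x => h x * ξ x :=
  integrable_of_memLp_top_restrict hξ.2.1 (memLp_top_restrict_of_continuousOn hξ.2.1
    ((hh.mono hξ.2.2).mul hξ.locallyLipschitz.continuous.continuousOn)) fun x hx => by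
      rw [image_eq_zero_of_notMem_tsupport hx, mul_zero]

end IsTestOn

end TestFunctions

/-! ### Caccioppoli inequality -/

section Caccioppoli

/-- `c v + div (A ∇v) ≤ 0` weakly in `U`. The integrals run over the whole space, as the test
functions vanish outside `U`. -/
def IsSupersolutionOn (A : 𝔼 n → 𝔼 n →L[ℝ] 𝔼 n) (c v : 𝔼 n → ℝ) (U : Set (𝔼 n)) : Prop :=
  ∀ ξ, IsTestOn U ξ → (∀ x, 0 ≤ ξ x) →
    ∫ x, c x * v x * ξ x ≤ ∫ x, ⟪A x (gradient v x), gradient ξ x⟫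

/-- The operator `v ↦ div (A ∇v) + c v` is uniformly elliptic in `U`, with continuous coefficients.
The single constant `Lam` bounds both `A` and `c`. -/
structure IsUniformlyEllipticOn (A : 𝔼 n → 𝔼 n →L[ℝ] 𝔼 n) (c : 𝔼 n → ℝ) (lam Lam : ℝ)
    (U : Set (𝔼 n)) : Prop where
  continuousOn_matrix : ContinuousOn A U
  continuousOn_potential : ContinuousOn c U
  lam_pos : 0 < lam
  lower_bound : ∀ x ∈ U, ∀ p, lam * ‖p‖ ^ 2 ≤ ⟪A x p, p⟫
  norm_matrix_le : ∀ x ∈ U, ‖A x‖ ≤ Lam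
  abs_potential_le : ∀ x ∈ U, |c x| ≤ Lam

/-- `η` is a Lipschitz cutoff function supported in `U` whose gradient is bounded by `D`. -/
structure IsCutoffOn (U : Set (𝔼 n)) (D : ℝ) (η : 𝔼 n → ℝ) : Prop where
  isTestOn : IsTestOn U η
  nonneg : ∀ x, 0 ≤ η x
  le_one : ∀ x, η x ≤ 1
  norm_gradient_le : ∀ x, ‖gradient η x‖ ≤ D

theorem exists_isCutoffOn_closedBall {U : Set (𝔼 n)} {x₀ : 𝔼 n} {r δ : ℝ} (hr : 0 ≤ r) (hδ : 0 < δ)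
    (hU : closedBall x₀ (δ + r) ⊆ U) : ∃ η, IsCutoffOn U δ⁻¹ η ∧
      (∀ x ∈ closedBall x₀ r, η x = 1) ∧ ∀ x ∉ closedBall x₀ (δ + r), η x = 0 := by
  have hball : thickening δ (closedBall x₀ r) ⊆ closedBall x₀ (δ + r) := by
    rw [thickening_closedBall hδ hr]
    exact ball_subset_closedBall
  have hlip : LipschitzWith δ.toNNReal⁻¹ fun x => (thickenedIndicator hδ (closedBall x₀ r) x : ℝ) :=
    lipschitzWith_thickenedIndicator hδ (closedBall x₀ r)
  have h0 : ∀ x ∉ closedBall x₀ (δ + r), (thickenedIndicator hδ (closedBall x₀ r) x : ℝ) = 0 :=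
    fun x hx => NNReal.coe_eq_zero.2 (thickenedIndicator_zero hδ _ fun h => hx (hball h))
  refine ⟨fun x => thickenedIndicator hδ (closedBall x₀ r) x, ⟨⟨⟨_, hlip⟩, ?_, ?_⟩,
    fun x => NNReal.coe_nonneg _, fun x => ?_, fun x => ?_⟩, fun x hx => ?_, h0⟩
  · exact HasCompactSupport.intro (isCompact_closedBall _ _) h0
  · refine (closure_minimal ?_ isClosed_closedBall).trans hU
    exact fun x hx => not_not.1 fun h => hx (h0 x h)
  · exact_mod_cast thickenedIndicator_le_one hδ _ x
  · simpa [hδ.le] using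
      norm_gradient_le_of_lipschitzOnWith (x := x) univ_mem (lipschitzOnWith_univ.2 hlip)
  · exact NNReal.coe_eq_one.2 (thickenedIndicator_one hδ _ hx)

/- Young's inequality absorbs the cross term `2 h g ⟪A p, q⟫` into `h² d ⟪A p, p⟫`. -/
theorem half_mul_le_sub_inner_clm {E : Type*} [NormedAddCommGroup E] [InnerProductSpace ℝ E]
    {A : E →L[ℝ] E} {p q : E} {c h g d v κ lam Lam D : ℝ} (hlam : 0 < lam) (hκ : 0 < κ)
    (hA : lam * ‖p‖ ^ 2 ≤ ⟪A p, p⟫) (hAn : ‖A‖ ≤ Lam) (hc : |c| ≤ Lam) (hh0 : 0 ≤ h) (hh1 : h ≤ 1)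
    (hq : ‖q‖ ≤ D) (hg : 0 ≤ g) (hd : g ^ 2 ≤ κ * d) (hv : 0 ≤ v) (hvg : v * g ≤ κ) :
    lam / 2 * (h ^ 2 * d * ‖p‖ ^ 2) ≤ κ * (2 * Lam ^ 2 * D ^ 2 / lam + Lam) -
      (⟪A p, (2 * (h * g)) • q - (h ^ 2 * d) • p⟫ - c * v * (h ^ 2 * g)) := by
  have hd0 : 0 ≤ d := nonneg_of_mul_nonneg_right ((sq_nonneg g).trans hd) hκ
  have hLam : 0 ≤ Lam := (norm_nonneg A).trans hAn
  have hcross : ⟪A p, q⟫ ≤ Lam * ‖p‖ * D :=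
    (real_inner_le_norm _ _).trans (mul_le_mul ((A.le_opNorm p).trans (by gcongr)) hq
      (norm_nonneg _) (by positivity))
  have hyoung : 2 * (h * g) * (Lam * ‖p‖ * D) ≤
      lam / 2 * (h ^ 2 * d * ‖p‖ ^ 2) + κ * (2 * Lam ^ 2 * D ^ 2 / lam) := by
    have hdg : h ^ 2 * ‖p‖ ^ 2 * g ^ 2 ≤ h ^ 2 * ‖p‖ ^ 2 * (κ * d) := by gcongr
    have hscaled : 2 * κ * lam * (2 * (h * g) * (Lam * ‖p‖ * D)) ≤
        2 * κ * lam * (lam / 2 * (h ^ 2 * d * ‖p‖ ^ 2) + κ * (2 * Lam ^ 2 * D ^ 2 / lam)) := by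
      have hrhs : 2 * κ * lam * (lam / 2 * (h ^ 2 * d * ‖p‖ ^ 2) +
          κ * (2 * Lam ^ 2 * D ^ 2 / lam)) =
          lam ^ 2 * (h ^ 2 * ‖p‖ ^ 2 * (κ * d)) + 4 * κ ^ 2 * (Lam * D) ^ 2 := by
        field_simp
        ring
      rw [hrhs]
      nlinarith [mul_le_mul_of_nonneg_left hdg (sq_nonneg lam),
        sq_nonneg (lam * (h * g * ‖p‖) - 2 * κ * (Lam * D))]
    exact le_of_mul_le_mul_left hscaled (by positivity)
  have hpot : -(c * v * (h ^ 2 * g)) ≤ κ * Lam := by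
    have hvh : h ^ 2 * (v * g) ≤ 1 * κ :=
      mul_le_mul (pow_le_one₀ hh0 hh1) hvg (by positivity) zero_le_one
    calc -(c * v * (h ^ 2 * g)) = -c * (h ^ 2 * (v * g)) := by ring
      _ ≤ Lam * (1 * κ) := mul_le_mul ((neg_le_abs c).trans hc) hvh (by positivity) hLam
      _ = κ * Lam := by ring
  rw [inner_sub_right, real_inner_smul_right, real_inner_smul_right]
  linarith [mul_le_mul_of_nonneg_left hcross (show 0 ≤ 2 * (h * g) by positivity),
    mul_le_mul_of_nonneg_left hA (show 0 ≤ h ^ 2 * d by positivity)]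

variable {A : 𝔼 n → 𝔼 n →L[ℝ] 𝔼 n} {c v η : 𝔼 n → ℝ} {lam Lam D κ : ℝ} {U : Set (𝔼 n)} {K : NNReal}

theorem gradient_sq_mul_comp {E : Type*} [NormedAddCommGroup E] [InnerProductSpace ℝ E]
    [CompleteSpace E] {η v : E → ℝ} {G : ℝ → ℝ} {x : E} (hη : DifferentiableAt ℝ η x)
    (hv : DifferentiableAt ℝ v x) (hG : DifferentiableAt ℝ G (v x)) :
    gradient (fun x => η x * (η x * G (v x))) x =
      (2 * (η x * G (v x))) • gradient η x - (η x ^ 2 * -deriv G (v x)) • gradient v x := by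
  have hGv : DifferentiableAt ℝ (fun x => G (v x)) x := hG.comp x hv
  rw [gradient_mul hη (hη.fun_mul hGv), gradient_mul hη hGv, gradient_comp_deriv hG hv]
  module

theorem IsCutoffOn.eq_zero_of_notMem (hη : IsCutoffOn U D η) {x : 𝔼 n} (hx : x ∉ U) : η x = 0 :=
  image_eq_zero_of_notMem_tsupport fun h => hx (hη.isTestOn.2.2 h)

section

variable (hU : IsOpen U) (hA : IsUniformlyEllipticOn A c lam Lam U) (hv : LipschitzOnWith K v U)
  (hv0 : ∀ x ∈ U, 0 ≤ v x) (hη : IsCutoffOn U D η) {G : ℝ → ℝ} (hκ : 0 < κ)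
  (hG : ∀ t, 0 ≤ t → ContDiffAt ℝ 1 G t) (hG0 : ∀ t, 0 ≤ t → 0 ≤ G t)
  (hGd : ∀ t, 0 ≤ t → G t ^ 2 ≤ κ * -deriv G t) (hGt : ∀ t, 0 ≤ t → t * G t ≤ κ)

include hU hv hv0 hη hG

theorem isTestOn_mul_comp : IsTestOn U fun x => η x * G (v x) :=
  hη.isTestOn.mul_locallyLipschitzOn hU <| locallyLipschitzOn_comp (fun x hx => hG _ (hv0 x hx))
    (locallyLipschitzOn_of_lipschitzOnWith hv)

theorem isTestOn_sq_mul_comp : IsTestOn U fun x => η x * (η x * G (v x)) :=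
  hη.isTestOn.mul_locallyLipschitzOn hU
    (isTestOn_mul_comp hU hv hv0 hη hG).locallyLipschitz.locallyLipschitzOn

theorem integrable_sq_mul_norm_gradient_sq :
    Integrable fun x => η x ^ 2 * -deriv G (v x) * ‖gradient v x‖ ^ 2 := by
  have hηc := hη.isTestOn.2.1
  have hηU := hη.isTestOn.2.2
  have hG' : ContinuousOn (fun x => deriv G (v x)) U := fun x hx =>
    have hderiv : ContinuousAt (deriv G) (v x) :=
      ((hG _ (hv0 x hx)).continuousAt_fderiv one_ne_zero).clm_apply continuousAt_const
    hderiv.comp_continuousWithinAt (hv.continuousOn x hx)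
  have hcoef : ContinuousOn (fun x => η x ^ 2 * -deriv G (v x)) (tsupport η) :=
    (hη.isTestOn.locallyLipschitz.continuous.pow 2).continuousOn.mul (hG'.neg.mono hηU)
  have hgrad := (memLp_top_gradient (μ := volume) hU (locallyLipschitzOn_of_lipschitzOnWith hv)
    hηc hηU).norm
  have hsq : MemLp (fun x => ‖gradient v x‖ ^ 2) ∞ (volume.restrict (tsupport η)) := by
    simpa only [sq, Pi.mul_def] using hgrad.mul (r := ∞) hgrad
  refine integrable_of_memLp_top_restrict hηc
    (hsq.mul (memLp_top_restrict_of_continuousOn hηc hcoef)) fun x hx => ?_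
  simp [image_eq_zero_of_notMem_tsupport hx]

include hA hκ hG0 hGd hGt

theorem ae_half_mul_le_indicator_sub : ∀ᵐ x,
    lam / 2 * (η x ^ 2 * -deriv G (v x) * ‖gradient v x‖ ^ 2) ≤
      (Function.support fun x => η x * G (v x)).indicator
        (fun _ => κ * (2 * Lam ^ 2 * D ^ 2 / lam + Lam)) x -
      (⟪A x (gradient v x), gradient (fun x => η x * (η x * G (v x))) x⟫ -
        c x * v x * (η x * (η x * G (v x)))) := by
  filter_upwards [hη.isTestOn.ae_differentiableAt, hv.ae_differentiableWithinAt_of_mem]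
    with x hηx hvx
  by_cases hx : x ∈ U
  · rw [gradient_sq_mul_comp hηx ((hvx hx).differentiableAt (hU.mem_nhds hx))
      ((hG _ (hv0 x hx)).differentiableAt one_ne_zero), ← mul_assoc (η x), ← sq]
    have hd := nonneg_of_mul_nonneg_right ((sq_nonneg _).trans (hGd _ (hv0 x hx))) hκ
    by_cases hxT : x ∈ Function.support fun x => η x * G (v x)
    · rw [indicator_of_mem hxT]
      exact half_mul_le_sub_inner_clm hA.lam_pos hκ (hA.lower_bound x hx _)
        (hA.norm_matrix_le x hx) (hA.abs_potential_le x hx) (hη.nonneg x) (hη.le_one x)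
        (hη.norm_gradient_le x) (hG0 _ (hv0 x hx)) (hGd _ (hv0 x hx)) (hv0 x hx)
        (hGt _ (hv0 x hx))
    · have hlow := mul_le_mul_of_nonneg_left (hA.lower_bound x hx (gradient v x))
        (mul_nonneg (sq_nonneg (η x)) hd)
      have hlam := hA.lam_pos
      have hpos : 0 ≤ lam * (η x ^ 2 * -deriv G (v x) * ‖gradient v x‖ ^ 2) := by positivity
      rw [indicator_of_notMem hxT, sq (η x), mul_assoc (η x) (η x) (G (v x)),
        Function.notMem_support.1 hxT, inner_sub_right, real_inner_smul_right,
        real_inner_smul_right]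
      linarith
  · have hξ := isTestOn_sq_mul_comp hU hv hv0 hη hG
    rw [gradient_of_notMem_tsupport fun h => hx (hξ.2.2 h), indicator_of_notMem] <;>
      simp [hη.eq_zero_of_notMem hx]

theorem integral_sq_mul_norm_gradient_sq_le (hsuper : IsSupersolutionOn A c v U) :
    ∫ x, η x ^ 2 * -deriv G (v x) * ‖gradient v x‖ ^ 2 ≤
      2 / lam * (κ * (2 * Lam ^ 2 * D ^ 2 / lam + Lam)) *
        volume.real (Function.support fun x => η x * G (v x)) := by
  have hηG := isTestOn_mul_comp hU hv hv0 hη hG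
  have hξ := isTestOn_sq_mul_comp hU hv hv0 hη hG
  have hT := hηG.locallyLipschitz.continuous.isOpen_support.measurableSet
  have hTfin := ((measure_mono (subset_tsupport _)).trans_lt
    (hηG.2.1.measure_lt_top (μ := volume))).ne
  have hint_T := (integrable_indicator_iff hT).2
    (integrableOn_const (C := κ * (2 * Lam ^ 2 * D ^ 2 / lam + Lam)) hTfin)
  have hint_A := hξ.integrable_inner_gradient hU hA.continuousOn_matrix
    (locallyLipschitzOn_of_lipschitzOnWith hv)
  have hint_c : Integrable fun x => c x * v x * (η x * (η x * G (v x))) :=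
    hξ.integrable_mul (hA.continuousOn_potential.mul hv.continuousOn)
  have hsuper_ξ := hsuper _ hξ fun x => by
    by_cases hx : x ∈ U
    · exact mul_nonneg (hη.nonneg x) (mul_nonneg (hη.nonneg x) (hG0 _ (hv0 x hx)))
    · simp [hη.eq_zero_of_notMem hx]
  have hle := integral_mono_ae
    ((integrable_sq_mul_norm_gradient_sq hU hv hv0 hη hG).const_mul (lam / 2))
    (hint_T.sub (hint_A.sub hint_c))
    (ae_half_mul_le_indicator_sub hU hA hv hv0 hη hκ hG hG0 hGd hGt)
  rw [integral_const_mul, integral_sub' hint_T (hint_A.sub hint_c), integral_sub' hint_A hint_c,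
    integral_indicator hT, setIntegral_const, smul_eq_mul] at hle
  have hlam := hA.lam_pos
  rw [div_mul_eq_mul_div, div_mul_eq_mul_div, le_div_iff₀ hlam]
  linarith

end

end Caccioppoli

/-! ### De Giorgi iteration -/

section DeGiorgi

theorem hasDerivAt_max_zero_sq (t : ℝ) : HasDerivAt (fun t => max t 0 ^ 2) (2 * max t 0) t := by
  have hne : ∀ y ≠ (0 : ℝ), HasDerivAt (fun t : ℝ => max t 0 ^ 2) (2 * max y 0) y := by
    intro y hy
    rcases hy.lt_or_gt with hy | hy
    · rw [max_eq_right hy.le, mul_zero]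
      refine (hasDerivAt_const y (0 : ℝ)).congr_of_eventuallyEq ?_
      filter_upwards [Iio_mem_nhds hy] with t ht
      rw [max_eq_right (mem_Iio.1 ht).le, zero_pow two_ne_zero]
    · rw [max_eq_left hy.le]
      have hsq : HasDerivAt (fun t : ℝ => t ^ 2) (2 * y) y := by simpa using hasDerivAt_pow 2 y
      refine hsq.congr_of_eventuallyEq ?_
      filter_upwards [Ioi_mem_nhds hy] with t ht
      rw [max_eq_left (mem_Ioi.1 ht).le]
  rcases eq_or_ne t 0 with rfl | ht
  · exact hasDerivAt_of_hasDerivAt_of_ne hne (by fun_prop) (by fun_prop)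
  · exact hne t ht

theorem hasDerivAt_max_sub_sq (s t : ℝ) :
    HasDerivAt (fun t => max (s - t) 0 ^ 2) (-(2 * max (s - t) 0)) t := by
  simpa using (hasDerivAt_max_zero_sq (s - t)).comp_const_sub s t

theorem contDiff_max_sub_sq (s : ℝ) : ContDiff ℝ 1 fun t => max (s - t) 0 ^ 2 := by
  have hderiv : deriv (fun t => max (s - t) 0 ^ 2) = fun t => -(2 * max (s - t) 0) :=
    funext fun t => (hasDerivAt_max_sub_sq s t).deriv
  refine contDiff_one_iff_deriv.2 ⟨fun t => (hasDerivAt_max_sub_sq s t).differentiableAt, ?_⟩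
  rw [hderiv]
  fun_prop

/-- The volume of the part of `closedBall x₀ r` where `v < s`, the quantity iterated in De Giorgi's
method. -/
def sublevelVolume (v : 𝔼 n → ℝ) (x₀ : 𝔼 n) (r s : ℝ) : ℝ :=
  volume.real ({x | v x < s} ∩ closedBall x₀ r)

theorem sublevelVolume_nonneg (v : 𝔼 n → ℝ) (x₀ : 𝔼 n) (r s : ℝ) : 0 ≤ sublevelVolume v x₀ r s :=
  measureReal_nonneg

theorem measureReal_le_sublevelVolume {v : 𝔼 n → ℝ} {x₀ : 𝔼 n} {r s : ℝ} {T : Set (𝔼 n)}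
    (hT : T ⊆ {x | v x < s} ∩ closedBall x₀ r) : volume.real T ≤ sublevelVolume v x₀ r s :=
  measureReal_mono hT
    ((measure_mono inter_subset_right).trans_lt measure_closedBall_lt_top).ne

theorem volume_support_mul_max_sq_le_sublevelVolume {v η : 𝔼 n → ℝ} {x₀ : 𝔼 n} {r s : ℝ}
    (hη : ∀ x ∉ closedBall x₀ r, η x = 0) :
    volume.real (Function.support fun x => η x * max (s - v x) 0 ^ 2) ≤
      sublevelVolume v x₀ r s := by
  refine measureReal_le_sublevelVolume fun x hx => ⟨show v x < s from not_le.1 fun h => hx ?_,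
    not_not.1 fun h => hx ?_⟩
  · simp [max_eq_right (sub_nonpos.2 h)]
  · simp [hη x h]

theorem sq_mul_sublevelVolume_le_integral_norm {v η : 𝔼 n → ℝ} {x₀ : 𝔼 n} {r s s' : ℝ}
    {U : Set (𝔼 n)} (hψ : IsTestOn U fun x => η x * max (s' - v x) 0 ^ 2)
    (hη : ∀ x ∈ closedBall x₀ r, η x = 1) (hss' : s < s') :
    (s' - s) ^ 2 * sublevelVolume v x₀ r s ≤ ∫ x, ‖η x * max (s' - v x) 0 ^ 2‖ := by
  have hψc := hψ.locallyLipschitz.continuous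
  have hint := (hψc.integrable_of_hasCompactSupport hψ.2.1).norm (μ := volume)
  have hsub : {x | v x < s} ∩ closedBall x₀ r ⊆
      {x | (s' - s) ^ 2 ≤ ‖η x * max (s' - v x) 0 ^ 2‖} := fun x hx => by
    have hvx : s' - s ≤ max (s' - v x) 0 := le_max_of_le_left (sub_le_sub_left hx.1.le _)
    rw [mem_ofPred_eq, hη x hx.2, one_mul, Real.norm_of_nonneg (sq_nonneg _)]
    exact pow_le_pow_left₀ (sub_pos.2 hss').le hvx 2
  exact (mul_le_mul_of_nonneg_left (measureReal_mono hsub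
    (hint.measure_ge_lt_top (pow_pos (sub_pos.2 hss') 2)).ne) (sq_nonneg _)).trans
    (mul_meas_ge_le_integral_of_nonneg (ae_of_all _ fun x => norm_nonneg _) hint _)

theorem half_le_of_tendsto_sublevelVolume {v : 𝔼 n → ℝ} {x₀ : 𝔼 n} {r l : ℝ} (hr : 0 < r)
    (hl : 0 < l) (hv : ContinuousOn v (ball x₀ (r / 2)))
    (hlim : Tendsto (fun i : ℕ => sublevelVolume v x₀ (r / 2 * (1 + 2⁻¹ ^ i))
      (l / 2 * (1 + 2⁻¹ ^ i))) atTop (𝓝 0)) :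
    ∀ x ∈ ball x₀ (r / 2), l / 2 ≤ v x := by
  refine fun x hx => not_lt.1 fun hvx => ?_
  have hopen : IsOpen (ball x₀ (r / 2) ∩ v ⁻¹' Iio (l / 2)) :=
    hv.isOpen_inter_preimage isOpen_ball isOpen_Iio
  have hzero : volume.real (ball x₀ (r / 2) ∩ v ⁻¹' Iio (l / 2)) ≤ 0 :=
    ge_of_tendsto' hlim fun i => measureReal_le_sublevelVolume fun y hy => by
      have hone : (1 : ℝ) ≤ 1 + 2⁻¹ ^ i := le_add_of_nonneg_right (by positivity)
      have hr' : r / 2 ≤ r / 2 * (1 + 2⁻¹ ^ i) := le_mul_of_one_le_right (by positivity) hone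
      have hl' : l / 2 ≤ l / 2 * (1 + 2⁻¹ ^ i) := le_mul_of_one_le_right (by positivity) hone
      exact ⟨lt_of_lt_of_le hy.2 hl', (ball_subset_closedBall hy.1).trans hr'⟩
  exact (ENNReal.toReal_pos (hopen.measure_pos volume ⟨x, hx, hvx⟩).ne'
    ((measure_mono inter_subset_left).trans_lt measure_ball_lt_top).ne).not_ge hzero

theorem caccioppoli_const_le {lam Lam : ℝ} (hlam : 0 < lam) (D : ℝ) :
    D + 1 + 2 / lam * (2 * Lam ^ 2 * D ^ 2 / lam + Lam) ≤
      (2 + 2 / lam * (2 * Lam ^ 2 / lam + |Lam|)) * (1 + D ^ 2) := by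
  have hD : D + 1 ≤ 2 * (1 + D ^ 2) := by nlinarith [sq_nonneg (D - 1)]
  have hLam : 2 * Lam ^ 2 * D ^ 2 / lam + Lam ≤ (2 * Lam ^ 2 / lam + |Lam|) * (1 + D ^ 2) := by
    have h₁ : 0 ≤ 2 * Lam ^ 2 / lam := by positivity
    have h₂ : 0 ≤ |Lam| * D ^ 2 := by positivity
    rw [mul_div_right_comm]
    linarith [le_abs_self Lam]
  linarith [mul_le_mul_of_nonneg_left hLam (show 0 ≤ 2 / lam by positivity)]

theorem exists_tendsto_zero_of_le_mul_rpow {K b α : ℝ} (hK : 0 < K) (hb : 1 < b) (hα : 0 < α) :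
    ∃ δ > 0, ∀ Y : ℕ → ℝ, (∀ i, 0 ≤ Y i) → (∀ i, Y (i + 1) ≤ K * b ^ i * Y i ^ α * Y i) →
      Y 0 ≤ δ → Tendsto Y atTop (𝓝 0) := by
  have hb0 : 0 < b := zero_lt_one.trans hb
  set σ := b ^ (-α⁻¹)
  have hσ0 : 0 < σ := Real.rpow_pos_of_pos hb0 _
  have hσ1 : σ < 1 := Real.rpow_lt_one_of_one_lt_of_neg hb (neg_neg_of_pos (inv_pos.2 hα))
  have hσα : b * σ ^ α = 1 := by
    rw [← Real.rpow_mul hb0.le, neg_mul, inv_mul_cancel₀ hα.ne', Real.rpow_neg_one,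
      mul_inv_cancel₀ hb0.ne']
  set δ := (σ / K) ^ α⁻¹
  have hδ0 : 0 < δ := Real.rpow_pos_of_pos (div_pos hσ0 hK) _
  have hδα : K * δ ^ α = σ := by
    rw [Real.rpow_inv_rpow (div_pos hσ0 hK).le hα.ne', mul_div_cancel₀ _ hK.ne']
  refine ⟨δ, hδ0, fun Y hY hrec hY0 => ?_⟩
  have hdecay : ∀ i, Y i ≤ δ * σ ^ i := by
    intro i
    induction i with
    | zero => simpa using hY0
    | succ i ih =>
      calc Y (i + 1) ≤ K * b ^ i * Y i ^ α * Y i := hrec i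
        _ ≤ K * b ^ i * (δ * σ ^ i) ^ α * (δ * σ ^ i) := by gcongr <;> exact hY i
        _ = K * δ ^ α * (b * σ ^ α) ^ i * (δ * σ ^ i) := by
          rw [Real.mul_rpow hδ0.le (pow_nonneg hσ0.le i), ← Real.rpow_pow_comm hσ0.le, mul_pow]
          ring
        _ = δ * σ ^ (i + 1) := by rw [hδα, hσα]; ring
  refine squeeze_zero hY hdecay ?_
  simpa using (tendsto_pow_atTop_nhds_zero_of_lt_one hσ0.le hσ1).const_mul δ

/- The left side gains `q⁻²` from the gap between consecutive levels, the right side `q⁻²` from the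
gap between consecutive radii. -/
theorem le_of_dyadic_step {C l r q X Y : ℝ} (hC : 0 ≤ C) (hl : 0 < l) (hr : 0 < r) (hq : 0 < q)
    (hq1 : q ≤ 1) (hX : 0 ≤ X)
    (h : (l / 4 * q) ^ 2 * Y ≤ C * (l / 2 * (1 + q)) ^ 2 * (1 + (r / 4 * q)⁻¹ ^ 2) * X) :
    Y ≤ 16 * C * (1 + 16 / r ^ 2) * q⁻¹ ^ 4 * X := by
  have hradius : 1 + (r / 4 * q)⁻¹ ^ 2 ≤ (1 + 16 / r ^ 2) * q⁻¹ ^ 2 := by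
    have : (r / 4 * q)⁻¹ ^ 2 = 16 / r ^ 2 * q⁻¹ ^ 2 := by field_simp; norm_num
    linarith [one_le_pow₀ ((one_le_inv₀ hq).2 hq1) (n := 2)]
  refine le_of_mul_le_mul_left (h.trans ?_) (show 0 < (l / 4 * q) ^ 2 by positivity)
  calc C * (l / 2 * (1 + q)) ^ 2 * (1 + (r / 4 * q)⁻¹ ^ 2) * X
      ≤ C * (l / 2 * (1 + 1)) ^ 2 * ((1 + 16 / r ^ 2) * q⁻¹ ^ 2) * X := by gcongr
    _ = _ := by field_simp; ring

variable {A : 𝔼 n → 𝔼 n →L[ℝ] 𝔼 n} {c v η : 𝔼 n → ℝ} {lam Lam D s : ℝ} {U : Set (𝔼 n)} {K : NNReal}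
  (hU : IsOpen U) (hA : IsUniformlyEllipticOn A c lam Lam U) (hv : LipschitzOnWith K v U)
  (hv0 : ∀ x ∈ U, 0 ≤ v x)

section

variable (hη : IsCutoffOn U D η) (hs : 0 < s)

include hU hv hv0 hη

theorem isTestOn_mul_max_sq : IsTestOn U fun x => η x * max (s - v x) 0 ^ 2 :=
  isTestOn_mul_comp hU hv hv0 hη fun _ _ => (contDiff_max_sub_sq s).contDiffAt

include hs

theorem ae_norm_gradient_mul_max_sq_le : ∀ᵐ x,
    ‖gradient (fun x => η x * max (s - v x) 0 ^ 2) x‖ ≤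
      (Function.support fun x => η x * max (s - v x) 0 ^ 2).indicator
        (fun _ => (D + 1) * s ^ 2) x +
      s⁻¹ * (η x ^ 2 * (2 * max (s - v x) 0) * ‖gradient v x‖ ^ 2) := by
  filter_upwards [hη.isTestOn.ae_differentiableAt, hv.ae_differentiableWithinAt_of_mem]
    with x hηx hvx
  have hp0 : 0 ≤ max (s - v x) 0 := le_max_right _ _
  by_cases hxT : x ∈ Function.support fun x => η x * max (s - v x) 0 ^ 2
  · have hx : x ∈ U := by
      by_contra hx
      simp [hη.eq_zero_of_notMem hx] at hxT
    have hvx := (hvx hx).differentiableAt (hU.mem_nhds hx)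
    have hGx := (hasDerivAt_max_sub_sq s (v x)).differentiableAt
    have hGvx : DifferentiableAt ℝ (fun x => max (s - v x) 0 ^ 2) x := hGx.comp x hvx
    have hps : max (s - v x) 0 ≤ s := max_le (by linarith [hv0 x hx]) hs.le
    have hyoung : 2 * (η x * ‖gradient v x‖) ≤ s⁻¹ * (η x * ‖gradient v x‖) ^ 2 + s := by
      have := two_mul_le_add_sq (η x * ‖gradient v x‖) s
      rw [inv_mul_eq_div, div_add' _ _ _ hs.ne', le_div_iff₀ hs]
      linarith
    rw [indicator_of_mem hxT, gradient_mul hηx hGvx, gradient_comp_deriv hGx hvx,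
      (hasDerivAt_max_sub_sq s _).deriv]
    set p := max (s - v x) 0
    have hη0 := hη.nonneg x
    calc ‖η x • -(2 * p) • gradient v x + p ^ 2 • gradient η x‖
        ≤ η x * (2 * p * ‖gradient v x‖) + p ^ 2 * ‖gradient η x‖ := by
          refine (norm_add_le _ _).trans_eq ?_
          simp [norm_smul, abs_of_nonneg, hη0, hp0]
      _ = p * (2 * (η x * ‖gradient v x‖)) + p ^ 2 * ‖gradient η x‖ := by ring
      _ ≤ p * (s⁻¹ * (η x * ‖gradient v x‖) ^ 2 + s) + s ^ 2 * D := by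
          gcongr
          exact hη.norm_gradient_le x
      _ ≤ (D + 1) * s ^ 2 + s⁻¹ * (η x ^ 2 * (2 * p) * ‖gradient v x‖ ^ 2) := by
          have : 0 ≤ p * (s⁻¹ * (η x * ‖gradient v x‖) ^ 2) := by positivity
          linarith [mul_le_mul_of_nonneg_right hps hs.le]
  · have hmin : IsLocalMin (fun x => η x * max (s - v x) 0 ^ 2) x :=
      Eventually.of_forall fun y =>
        (Function.notMem_support.1 hxT).trans_le (mul_nonneg (hη.nonneg y) (sq_nonneg _))
    rw [gradient, hmin.fderiv_eq_zero, map_zero, norm_zero, indicator_of_notMem hxT, zero_add]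
    positivity

include hA

theorem integral_sq_mul_max_mul_norm_gradient_sq_le (hsuper : IsSupersolutionOn A c v U) :
    ∫ x, η x ^ 2 * (2 * max (s - v x) 0) * ‖gradient v x‖ ^ 2 ≤
      2 / lam * (s ^ 3 * (2 * Lam ^ 2 * D ^ 2 / lam + Lam)) *
        volume.real (Function.support fun x => η x * max (s - v x) 0 ^ 2) := by
  have := integral_sq_mul_norm_gradient_sq_le hU hA hv hv0 hη (pow_pos hs 3)
    (fun t _ => (contDiff_max_sub_sq s).contDiffAt) (fun t _ => sq_nonneg _) ?_ ?_ hsuper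
  · simpa only [(hasDerivAt_max_sub_sq s _).deriv, neg_neg] using this
  · intro t ht
    have hle : max (s - t) 0 ≤ s := max_le (by linarith) hs.le
    have h0 : 0 ≤ max (s - t) 0 := le_max_right _ _
    rw [(hasDerivAt_max_sub_sq s t).deriv, neg_neg]
    calc (max (s - t) 0 ^ 2) ^ 2 = max (s - t) 0 ^ 3 * max (s - t) 0 := by ring
      _ ≤ s ^ 3 * (2 * max (s - t) 0) := by gcongr; linarith
  · intro t ht
    rcases le_total t s with hts | hts
    · have hle : max (s - t) 0 ≤ s := max_le (by linarith) hs.le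
      calc t * max (s - t) 0 ^ 2 ≤ s * s ^ 2 := by gcongr
        _ = s ^ 3 := by ring
    · rw [max_eq_right (sub_nonpos.2 hts)]
      nlinarith [pow_pos hs 3]

theorem integral_norm_gradient_mul_max_sq_le (hsuper : IsSupersolutionOn A c v U) :
    ∫ x, ‖gradient (fun x => η x * max (s - v x) 0 ^ 2) x‖ ≤
      s ^ 2 * (D + 1 + 2 / lam * (2 * Lam ^ 2 * D ^ 2 / lam + Lam)) *
        volume.real (Function.support fun x => η x * max (s - v x) 0 ^ 2) := by
  have hψ := isTestOn_mul_max_sq (s := s) hU hv hv0 hη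
  have hT := hψ.locallyLipschitz.continuous.isOpen_support.measurableSet
  have hTfin := ((measure_mono (subset_tsupport _)).trans_lt
    (hψ.2.1.measure_lt_top (μ := volume))).ne
  have hint_T := (integrable_indicator_iff hT).2
    (integrableOn_const (C := (D + 1) * s ^ 2) hTfin)
  have hint_E : Integrable fun x => s⁻¹ * (η x ^ 2 * (2 * max (s - v x) 0) *
      ‖gradient v x‖ ^ 2) := by
    simpa only [(hasDerivAt_max_sub_sq s _).deriv, neg_neg] using
      (integrable_sq_mul_norm_gradient_sq hU hv hv0 hη
        fun _ _ => (contDiff_max_sub_sq s).contDiffAt).const_mul s⁻¹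
  have hle := integral_mono_of_nonneg (ae_of_all _ fun x => norm_nonneg _) (hint_T.add hint_E)
    (ae_norm_gradient_mul_max_sq_le hU hv hv0 hη hs)
  rw [integral_add' hint_T hint_E, integral_const_mul, integral_indicator hT, setIntegral_const,
    smul_eq_mul] at hle
  refine hle.trans ((add_le_add_right (mul_le_mul_of_nonneg_left
    (integral_sq_mul_max_mul_norm_gradient_sq_le hU hA hv hv0 hη hs hsuper)
    (inv_nonneg.2 hs.le)) _).trans_eq ?_)
  field_simp

end

include hU hA hv hv0 in
theorem exists_sq_mul_sublevelVolume_le (hn : n ≠ 0) (hsuper : IsSupersolutionOn A c v U) :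
    ∃ C > 0, ∀ (x₀ : 𝔼 n) (r δ s s' : ℝ), 0 ≤ r → 0 < δ → closedBall x₀ (δ + r) ⊆ U → 0 < s' →
      s < s' → (s' - s) ^ 2 * sublevelVolume v x₀ r s ≤ C * s' ^ 2 * (1 + δ⁻¹ ^ 2) *
        sublevelVolume v x₀ (δ + r) s' ^ (n : ℝ)⁻¹ * sublevelVolume v x₀ (δ + r) s' := by
  have : NeZero n := ⟨hn⟩
  obtain ⟨C, hC, hsob⟩ := exists_integral_norm_le_rpow_mul_integral_norm_fderiv
    (volume : Measure (𝔼 n))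
  have hlam := hA.lam_pos
  refine ⟨C * (2 + 2 / lam * (2 * Lam ^ 2 / lam + |Lam|)), by positivity,
    fun x₀ r δ s s' hr hδ hball hs' hss' => ?_⟩
  obtain ⟨η, hη, hη1, hη0⟩ := exists_isCutoffOn_closedBall hr hδ hball
  set ψ := fun x => η x * max (s' - v x) 0 ^ 2
  have hψ : IsTestOn U ψ := isTestOn_mul_max_sq hU hv hv0 hη
  have hT : volume.real (Function.support ψ) ≤ sublevelVolume v x₀ (δ + r) s' :=
    volume_support_mul_max_sq_le_sublevelVolume hη0
  have hlow : (s' - s) ^ 2 * sublevelVolume v x₀ r s ≤ ∫ x, ‖ψ x‖ :=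
    sq_mul_sublevelVolume_le_integral_norm hψ hη1 hss'
  obtain ⟨L, hL⟩ := hψ.1
  have hgrad := integral_norm_gradient_mul_max_sq_le hU hA hv hv0 hη hs' hsuper
  simp only [norm_gradient] at hgrad
  have hfk := hsob L ψ hL hψ.2.1
  rw [finrank_euclideanSpace_fin] at hfk
  have hconst := caccioppoli_const_le (Lam := Lam) hlam δ⁻¹
  have hT0 := sublevelVolume_nonneg v x₀ (δ + r) s'
  calc (s' - s) ^ 2 * sublevelVolume v x₀ r s ≤ ∫ x, ‖ψ x‖ := hlow
    _ ≤ C * volume.real (Function.support ψ) ^ (n : ℝ)⁻¹ * (s' ^ 2 *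
        ((2 + 2 / lam * (2 * Lam ^ 2 / lam + |Lam|)) * (1 + δ⁻¹ ^ 2)) *
          volume.real (Function.support ψ)) := by
        refine hfk.trans (mul_le_mul_of_nonneg_left (hgrad.trans ?_) (by positivity))
        gcongr
    _ ≤ C * sublevelVolume v x₀ (δ + r) s' ^ (n : ℝ)⁻¹ * (s' ^ 2 *
        ((2 + 2 / lam * (2 * Lam ^ 2 / lam + |Lam|)) * (1 + δ⁻¹ ^ 2)) *
          sublevelVolume v x₀ (δ + r) s') := by gcongr
    _ = _ := by ring

include hU hA hv hv0 in
theorem exists_half_le_of_sublevelVolume_le (hn : n ≠ 0) (hsuper : IsSupersolutionOn A c v U)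
    {x₀ : 𝔼 n} {r : ℝ} (hr : 0 < r) (hball : closedBall x₀ r ⊆ U) :
    ∃ δ > 0, ∀ l > 0, sublevelVolume v x₀ r l ≤ δ → ∀ x ∈ ball x₀ (r / 2), l / 2 ≤ v x := by
  obtain ⟨C, hC, hstep⟩ := exists_sq_mul_sublevelVolume_le hU hA hv hv0 hn hsuper
  obtain ⟨δ, hδ, hconv⟩ := exists_tendsto_zero_of_le_mul_rpow
    (K := 16 * C * (1 + 16 / r ^ 2)) (b := 16) (α := (n : ℝ)⁻¹) (by positivity) (by norm_num)
    (by positivity)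
  have hsub : ball x₀ (r / 2) ⊆ U :=
    (ball_subset_closedBall.trans (closedBall_subset_closedBall (by linarith))).trans hball
  refine ⟨δ, hδ, fun l hl hlδ =>
    half_le_of_tendsto_sublevelVolume hr hl (hv.continuousOn.mono hsub) ?_⟩
  set Y := fun i : ℕ => sublevelVolume v x₀ (r / 2 * (1 + 2⁻¹ ^ i)) (l / 2 * (1 + 2⁻¹ ^ i))
  refine hconv Y (fun i => sublevelVolume_nonneg _ _ _ _) (fun i => ?_) (by
    simpa [Y, one_add_one_eq_two] using hlδ)
  have hq : (0 : ℝ) < 2⁻¹ ^ i := by positivity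
  have hq1 : (2⁻¹ : ℝ) ^ i ≤ 1 := pow_le_one₀ (by norm_num) (by norm_num)
  have hradius : r / 4 * 2⁻¹ ^ i + r / 2 * (1 + 2⁻¹ ^ (i + 1)) = r / 2 * (1 + 2⁻¹ ^ i) := by
    ring
  have hi := hstep x₀ (r / 2 * (1 + 2⁻¹ ^ (i + 1))) (r / 4 * 2⁻¹ ^ i)
    (l / 2 * (1 + 2⁻¹ ^ (i + 1))) (l / 2 * (1 + 2⁻¹ ^ i)) (by positivity) (by positivity)
    ((closedBall_subset_closedBall (by nlinarith)).trans hball) (by positivity)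
    (by rw [pow_succ]; nlinarith)
  have h16 : (16 : ℝ) ^ i = ((2⁻¹ : ℝ) ^ i)⁻¹ ^ 4 := by
    rw [← inv_pow, inv_inv, ← pow_mul, mul_comm i, pow_mul]
    norm_num
  rw [h16, mul_assoc _ (Y i ^ _)]
  refine le_of_dyadic_step hC.le hl hr hq hq1 (mul_nonneg (Real.rpow_nonneg
    (sublevelVolume_nonneg _ _ _ _) _) (sublevelVolume_nonneg _ _ _ _)) ?_
  rw [hradius, mul_assoc _ (_ ^ (n : ℝ)⁻¹)] at hi
  convert hi using 3
  ring

end DeGiorgi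

/-! ### Strong maximum principle -/

section StrongMaximumPrinciple

theorem IsUniformlyEllipticOn.mono {A : 𝔼 n → 𝔼 n →L[ℝ] 𝔼 n} {c : 𝔼 n → ℝ} {lam Lam : ℝ}
    {U V : Set (𝔼 n)} (hA : IsUniformlyEllipticOn A c lam Lam U) (hVU : V ⊆ U) :
    IsUniformlyEllipticOn A c lam Lam V where
  continuousOn_matrix := hA.continuousOn_matrix.mono hVU
  continuousOn_potential := hA.continuousOn_potential.mono hVU
  lam_pos := hA.lam_pos
  lower_bound x hx := hA.lower_bound x (hVU hx)
  norm_matrix_le x hx := hA.norm_matrix_le x (hVU hx)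
  abs_potential_le x hx := hA.abs_potential_le x (hVU hx)

theorem IsSupersolutionOn.mono {A : 𝔼 n → 𝔼 n →L[ℝ] 𝔼 n} {c v : 𝔼 n → ℝ} {U V : Set (𝔼 n)}
    (hv : IsSupersolutionOn A c v U) (hVU : V ⊆ U) : IsSupersolutionOn A c v V :=
  fun ξ hξ => hv ξ (hξ.mono hVU)

theorem exists_isUniformlyEllipticOn_of_isCompact {A : 𝔼 n → 𝔼 n →L[ℝ] 𝔼 n} {c : 𝔼 n → ℝ}
    {S : Set (𝔼 n)} (hS : IsCompact S) (hA : ContinuousOn A S) (hc : ContinuousOn c S)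
    (hpos : ∀ x ∈ S, ∀ p ≠ 0, 0 < ⟪A x p, p⟫) : ∃ lam Lam, IsUniformlyEllipticOn A c lam Lam S := by
  have hAfst : ContinuousOn (fun q : 𝔼 n × 𝔼 n => A q.1) (S ×ˢ sphere 0 1) :=
    hA.comp continuousOn_fst fun q hq => hq.1
  have hcont : ContinuousOn (fun q : 𝔼 n × 𝔼 n => ⟪A q.1 q.2, q.2⟫) (S ×ˢ sphere 0 1) :=
    (hAfst.clm_apply continuousOn_snd).inner continuousOn_snd
  obtain ⟨lam, hlam, hlow⟩ := (hS.prod (isCompact_sphere 0 1)).exists_forall_le' hcont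
    fun q hq => hpos _ hq.1 _ (ne_zero_of_mem_unit_sphere ⟨q.2, hq.2⟩)
  obtain ⟨L₁, hL₁⟩ := hS.exists_bound_of_continuousOn hA
  obtain ⟨L₂, hL₂⟩ := hS.exists_bound_of_continuousOn hc
  refine ⟨lam, max L₁ L₂, hA, hc, hlam, fun x hx p => ?_, fun x hx => le_max_of_le_left (hL₁ x hx),
    fun x hx => le_max_of_le_right (hL₂ x hx)⟩
  rcases eq_or_ne p 0 with rfl | hp
  · simp
  have hunit := hlow (x, ‖p‖⁻¹ • p) ⟨hx, by simp [norm_smul, hp]⟩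
  rw [map_smul, real_inner_smul_left, real_inner_smul_right] at hunit
  calc lam * ‖p‖ ^ 2 ≤ ‖p‖⁻¹ * (‖p‖⁻¹ * ⟪A x p, p⟫) * ‖p‖ ^ 2 := by gcongr
    _ = ⟪A x p, p⟫ := by field_simp [norm_ne_zero_iff.2 hp]

variable {A : 𝔼 n → 𝔼 n →L[ℝ] 𝔼 n} {c v : 𝔼 n → ℝ} {lam Lam : ℝ} {U : Set (𝔼 n)}

theorem norm_fderiv_log_add_le {E : Type*} [NormedAddCommGroup E] [InnerProductSpace ℝ E]
    [CompleteSpace E] {v : E → ℝ} {x : E} {ε : ℝ} (hv : DifferentiableAt ℝ v x)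
    (hpos : 0 < v x + ε) : ‖fderiv ℝ (fun x => Real.log (v x + ε)) x‖ ≤
      1 + ((v x + ε) ^ 2)⁻¹ * ‖gradient v x‖ ^ 2 := by
  rw [((hv.hasFDerivAt.add_const ε).log hpos.ne').fderiv, norm_smul, ← norm_gradient, norm_inv,
    Real.norm_of_nonneg hpos.le, ← inv_pow, ← mul_pow]
  nlinarith [sq_nonneg ((v x + ε)⁻¹ * ‖gradient v x‖ - 1)]

theorem tendsto_sublevelVolume_zero {S : Set (𝔼 n)} {x₀ : 𝔼 n} {ρ : ℝ} (hv : ContinuousOn v S)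
    (hv0 : ∀ x ∈ S, 0 ≤ v x) (hS : closedBall x₀ ρ ⊆ S)
    (h0 : volume (closedBall x₀ ρ ∩ v ⁻¹' {0}) = 0) :
    Tendsto (fun k : ℕ => sublevelVolume v x₀ ρ (1 / (k + 1))) atTop (𝓝 0) := by
  have hmeas : ∀ s : ℝ, MeasurableSet ({x | v x < s} ∩ closedBall x₀ ρ) := fun s => by
    have hclosed := (hv.mono hS).preimage_isClosed_of_isClosed isClosed_closedBall
      (isClosed_Ici (a := s))
    rw [inter_comm, show {x | v x < s} = (v ⁻¹' Ici s)ᶜ by ext x; simp, ← sdiff_eq,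
      ← sdiff_self_inter]
    exact measurableSet_closedBall.diff hclosed.measurableSet
  have hanti : Antitone fun k : ℕ => {x | v x < 1 / (k + 1)} ∩ closedBall x₀ ρ :=
    fun i j hij => inter_subset_inter_left _ fun x (hx : v x < 1 / (j + 1)) =>
      hx.trans_le (Nat.one_div_le_one_div hij)
  have hlim := tendsto_measure_iInter_atTop (μ := volume) (fun k => (hmeas _).nullMeasurableSet)
    hanti ⟨0, ((measure_mono inter_subset_right).trans_lt measure_closedBall_lt_top).ne⟩
  rw [measure_mono_null (fun x hx => ?_) h0] at hlim
  · exact (ENNReal.tendsto_toReal ENNReal.zero_ne_top).comp hlim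
  rw [mem_iInter] at hx
  refine ⟨(hx 0).2, le_antisymm (le_of_forall_pos_lt_add fun ε hε => ?_) (hv0 x (hS (hx 0).2))⟩
  obtain ⟨k, hk⟩ := exists_nat_one_div_lt hε
  rw [zero_add]
  exact (hx k).1.trans hk

section Local

variable {K : NNReal} {x₀ x₁ : 𝔼 n} {r : ℝ} (hU : IsOpen U)
  (hA : IsUniformlyEllipticOn A c lam Lam U) (hv : LipschitzOnWith K v U) (hv0 : ∀ x ∈ U, 0 ≤ v x)

include hU hA hv hv0

/- The test function is `η² / (v + ε)`; the bound does not depend on `ε`. -/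
theorem lintegral_sq_mul_norm_gradient_sq_div_le {η : 𝔼 n → ℝ} {D ε : ℝ} (hη : IsCutoffOn U D η)
    (hε : 0 < ε) (hsuper : IsSupersolutionOn A c v U) :
    ∫⁻ x, ENNReal.ofReal (η x ^ 2 * ((v x + ε) ^ 2)⁻¹ * ‖gradient v x‖ ^ 2) ≤
      ENNReal.ofReal (2 / lam * (2 * Lam ^ 2 * D ^ 2 / lam + Lam) *
        volume.real (Function.support η)) := by
  have hpos : ∀ t, 0 ≤ t → 0 < t + ε := fun t ht => add_pos_of_nonneg_of_pos ht hε
  have hderiv : ∀ t, 0 ≤ t → -deriv (fun t => (t + ε)⁻¹) t = ((t + ε) ^ 2)⁻¹ := fun t ht => by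
    have h := ((hasDerivAt_id t).add_const ε).fun_inv (hpos t ht).ne'
    simpa [neg_div] using congrArg Neg.neg h.deriv
  have hG : ∀ t, 0 ≤ t → ContDiffAt ℝ 1 (fun t => (t + ε)⁻¹) t := fun t ht =>
    (contDiffAt_id.add contDiffAt_const).inv (hpos t ht).ne'
  have hint := integrable_sq_mul_norm_gradient_sq hU hv hv0 hη hG
  have henergy := integral_sq_mul_norm_gradient_sq_le hU hA hv hv0 hη one_pos hG
    (fun t ht => (inv_pos.2 (hpos t ht)).le)
    (fun t ht => by rw [hderiv t ht, one_mul, inv_pow])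
    (fun t ht => by
      rw [← div_eq_mul_inv]
      exact div_le_one_of_le₀ (by linarith) (hpos t ht).le) hsuper
  have hsupp : (Function.support fun x => η x * (v x + ε)⁻¹) = Function.support η := by
    rw [Function.support_mul, inter_eq_left]
    intro x hx
    refine inv_ne_zero (hpos _ (hv0 x ?_)).ne'
    exact not_not.1 fun hxU => hx (hη.eq_zero_of_notMem hxU)
  have hF : (fun x => η x ^ 2 * -deriv (fun t => (t + ε)⁻¹) (v x) * ‖gradient v x‖ ^ 2) =
      fun x => η x ^ 2 * ((v x + ε) ^ 2)⁻¹ * ‖gradient v x‖ ^ 2 := funext fun x => by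
    by_cases hx : x ∈ U
    · rw [hderiv _ (hv0 x hx)]
    · simp [hη.eq_zero_of_notMem hx]
  rw [hF] at hint henergy
  rw [hsupp, one_mul] at henergy
  rw [← ofReal_integral_eq_lintegral_ofReal hint (ae_of_all _ fun x => by positivity)]
  exact ENNReal.ofReal_le_ofReal henergy

variable (hsuper : IsSupersolutionOn A c v U) (hr : 0 < r) (hball : closedBall x₀ r ⊆ U)

include hsuper hr hball

theorem exists_lintegral_fderiv_log_le : ∃ M : ℝ≥0∞, M ≠ ∞ ∧ ∀ ε > 0,
    ∫⁻ x in ball x₀ (r / 2), ‖fderiv ℝ (fun x => Real.log (v x + ε)) x‖ₑ ≤ M := by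
  obtain ⟨η, hη, hη1, -⟩ := exists_isCutoffOn_closedBall (U := U) (x₀ := x₀)
    (half_pos hr).le (half_pos hr) (by rwa [add_halves])
  refine ⟨volume (ball x₀ (r / 2)) + _, ENNReal.add_ne_top.2 ⟨measure_ball_lt_top.ne,
    ENNReal.ofReal_ne_top⟩, fun ε hε => le_trans ?_ (add_le_add_right
      (lintegral_sq_mul_norm_gradient_sq_div_le hU hA hv hv0 hη hε hsuper) _)⟩
  set F := fun x => η x ^ 2 * ((v x + ε) ^ 2)⁻¹ * ‖gradient v x‖ ^ 2
  have hsub : ball x₀ (r / 2) ⊆ U :=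
    (ball_subset_closedBall.trans (closedBall_subset_closedBall (half_le_self hr.le))).trans hball
  have hle : ∀ᵐ x, x ∈ ball x₀ (r / 2) →
      ‖fderiv ℝ (fun x => Real.log (v x + ε)) x‖ₑ ≤ 1 + ENNReal.ofReal (F x) := by
    filter_upwards [hv.ae_differentiableWithinAt_of_mem] with x hvx hx
    have hle := norm_fderiv_log_add_le ((hvx (hsub hx)).differentiableAt (hU.mem_nhds (hsub hx)))
      (add_pos_of_nonneg_of_pos (hv0 x (hsub hx)) hε)
    rw [← ofReal_norm, ← ENNReal.ofReal_one, ← ENNReal.ofReal_add zero_le_one (by positivity)]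
    simpa [F, hη1 x (ball_subset_closedBall hx)] using ENNReal.ofReal_le_ofReal hle
  calc ∫⁻ x in ball x₀ (r / 2), ‖fderiv ℝ (fun x => Real.log (v x + ε)) x‖ₑ
      ≤ ∫⁻ x in ball x₀ (r / 2), (1 + ENNReal.ofReal (F x)) :=
        setLIntegral_mono_ae' measurableSet_ball hle
    _ ≤ volume (ball x₀ (r / 2)) + ∫⁻ x, ENNReal.ofReal (F x) := by
        rw [lintegral_add_left measurable_const, setLIntegral_one]
        gcongr
        exact Measure.restrict_le_self

/- The bound on `∇ log (v + ε)` is uniform in `ε`, whereas `log (v + ε)` jumps by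
`log ((m + ε) / ε)` between `x` and `x + h`. -/
theorem volume_eq_zero_of_le_translate {T : Set (𝔼 n)} {h : 𝔼 n} {m : ℝ} (hT : MeasurableSet T)
    (hTB : T ⊆ ball x₀ (r / 2)) (hTh : ∀ x ∈ T, x + h ∈ ball x₀ (r / 2)) (hm : 0 < m)
    (hvT : ∀ x ∈ T, v x = 0) (hvh : ∀ x ∈ T, m ≤ v (x + h)) : volume T = 0 := by
  obtain ⟨M, hM, hlog⟩ := exists_lintegral_fderiv_log_le hU hA hv hv0 hsuper hr hball
  have hbound : ∀ k : ℕ, k * volume T ≤ ‖h‖ₑ * M := fun k => by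
    set ε := m * Real.exp (-k)
    have hε : 0 < ε := by positivity
    obtain ⟨L, hL⟩ := ((locallyLipschitzOn_comp (g := fun t => Real.log (t + ε))
      (fun x hx => (contDiffAt_id.add contDiffAt_const).log
        (add_pos_of_nonneg_of_pos (hv0 x hx) hε).ne')
      (locallyLipschitzOn_of_lipschitzOnWith hv)).mono hball).exists_lipschitzOnWith_of_compact
      (isCompact_closedBall x₀ r)
    have htrans := lintegral_enorm_add_sub_le (μ := volume) isOpen_ball (convex_ball x₀ (r / 2))
      (hL.mono (ball_subset_closedBall.trans
        (closedBall_subset_closedBall (half_le_self hr.le)))) hT hTB hTh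
    calc k * volume T = ∫⁻ _ in T, (k : ℝ≥0∞) := (setLIntegral_const _ _).symm
      _ ≤ _ := setLIntegral_mono' hT fun x hx => ?_
      _ ≤ _ := htrans
      _ ≤ ‖h‖ₑ * M := by gcongr; exact hlog ε hε
    have hjump : (k : ℝ) ≤ Real.log (v (x + h) + ε) - Real.log (v x + ε) := by
      have hlow := Real.log_le_log hm ((hvh x hx).trans (le_add_of_nonneg_right hε.le))
      have hlogε : Real.log ε = Real.log m - k := by
        rw [Real.log_mul hm.ne' (Real.exp_ne_zero _), Real.log_exp, sub_eq_add_neg]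
      rw [hvT x hx, zero_add, hlogε]
      linarith
    rw [← ENNReal.ofReal_natCast, ← ofReal_norm]
    exact ENNReal.ofReal_le_ofReal (hjump.trans (Real.le_norm_self _))
  by_contra hT0
  obtain ⟨k, hk⟩ := ENNReal.exists_nat_mul_gt hT0 (ENNReal.mul_ne_top (enorm_ne_top (x := h)) hM)
  exact hk.not_ge (hbound k)

theorem exists_volume_ball_inter_eq_zero (hx₁ : x₁ ∈ ball x₀ (r / 2)) (hvx₁ : 0 < v x₁) :
    ∃ ρ > 0, ρ ≤ r / 2 ∧ volume (ball x₀ ρ ∩ v ⁻¹' {0}) = 0 := by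
  have hsub : ball x₀ (r / 2) ⊆ U :=
    (ball_subset_closedBall.trans (closedBall_subset_closedBall (half_le_self hr.le))).trans hball
  obtain ⟨ρ, hρ, hρv⟩ := Metric.eventually_nhds_iff_ball.1 (Filter.Eventually.and
    (isOpen_ball.mem_nhds hx₁) ((hv.continuousOn.continuousAt (hU.mem_nhds (hsub hx₁))).eventually
      (lt_mem_nhds (half_lt_self hvx₁))))
  refine ⟨min ρ (r / 2), lt_min hρ (half_pos hr), min_le_right _ _, ?_⟩
  have hsubball : ball x₀ (min ρ (r / 2)) ⊆ ball x₀ (r / 2) := ball_subset_ball (min_le_right _ _)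
  have htrans : ∀ x ∈ ball x₀ (min ρ (r / 2)), x + (x₁ - x₀) ∈ ball x₁ ρ := fun x hx => by
    have := mem_ball.1 (ball_subset_ball (min_le_left _ _) hx)
    rwa [mem_ball, dist_eq_norm, show x + (x₁ - x₀) - x₁ = x - x₀ by abel, ← dist_eq_norm]
  have hT : ball x₀ (min ρ (r / 2)) ∩ v ⁻¹' {0} =
      ball x₀ (min ρ (r / 2)) \ (ball x₀ (min ρ (r / 2)) ∩ v ⁻¹' {0}ᶜ) := by
    rw [sdiff_self_inter, sdiff_eq, preimage_compl, compl_compl]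
  refine volume_eq_zero_of_le_translate hU hA hv hv0 hsuper hr hball ?_
    (fun x hx => hsubball hx.1) (fun x hx => (hρv _ (htrans x hx.1)).1) (half_pos hvx₁)
    (fun x hx => hx.2) fun x hx => (hρv _ (htrans x hx.1)).2.le
  rw [hT]
  exact measurableSet_ball.diff ((hv.continuousOn.mono (hsubball.trans hsub)).isOpen_inter_preimage
    isOpen_ball isOpen_compl_singleton).measurableSet

theorem pos_of_pos_of_mem_ball (hn : n ≠ 0) (hx₁ : x₁ ∈ ball x₀ (r / 2)) (hvx₁ : 0 < v x₁) :
    0 < v x₀ := by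
  obtain ⟨ρ, hρ, hρr, hzero⟩ :=
    exists_volume_ball_inter_eq_zero hU hA hv hv0 hsuper hr hball hx₁ hvx₁
  have hsub : closedBall x₀ (ρ / 2) ⊆ U :=
    (closedBall_subset_closedBall (by linarith)).trans hball
  obtain ⟨δ, hδ, hhalf⟩ := exists_half_le_of_sublevelVolume_le hU hA hv hv0 hn hsuper
    (half_pos hρ) hsub
  obtain ⟨k, hk⟩ := ((tendsto_sublevelVolume_zero hv.continuousOn hv0 hsub
    (measure_mono_null (inter_subset_inter_left _ (closedBall_subset_ball (half_lt_self hρ)))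
      hzero)).eventually (gt_mem_nhds hδ)).exists
  exact (half_pos Nat.one_div_pos_of_nat).trans_le
    (hhalf _ Nat.one_div_pos_of_nat hk.le x₀ (mem_ball_self (half_pos (half_pos hρ))))

end Local

/- The set where `v > 0` is relatively closed in `U`, by the local statement. -/
theorem pos_of_isSupersolutionOn (hn : n ≠ 0) (hU : IsOpen U) (hUc : IsPreconnected U)
    (hA : ContinuousOn A U) (hc : ContinuousOn c U)
    (hpos : ∀ x ∈ U, ∀ p ≠ 0, 0 < ⟪A x p, p⟫) (hv : LocallyLipschitzOn U v)
    (hv0 : ∀ x ∈ U, 0 ≤ v x) (hsuper : IsSupersolutionOn A c v U) {x₁ : 𝔼 n} (hx₁ : x₁ ∈ U)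
    (hvx₁ : 0 < v x₁) : ∀ x ∈ U, 0 < v x := by
  have hopen : IsOpen (U ∩ v ⁻¹' Ioi 0) := hv.continuousOn.isOpen_inter_preimage hU isOpen_Ioi
  refine fun x hx => (hUc.subset_of_closure_inter_subset hopen ⟨x₁, hx₁, hx₁, hvx₁⟩ ?_ hx).2
  rintro x₀ ⟨hx₀, hx₀U⟩
  obtain ⟨R, hR, hball⟩ := nhds_basis_closedBall.mem_iff.1 (hU.mem_nhds hx₀U)
  obtain ⟨lam, Lam, hell⟩ := exists_isUniformlyEllipticOn_of_isCompact (isCompact_closedBall x₀ R)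
    (hA.mono hball) (hc.mono hball) fun x hx => hpos x (hball hx)
  obtain ⟨K, hK⟩ := (hv.mono hball).exists_lipschitzOnWith_of_compact (isCompact_closedBall x₀ R)
  have hsub := ball_subset_closedBall (x := x₀) (ε := R)
  obtain ⟨y, hy, hyP⟩ := mem_closure_iff.1 hx₀ _ isOpen_ball
    (mem_ball_self (half_pos (half_pos hR)))
  exact ⟨hx₀U, pos_of_pos_of_mem_ball isOpen_ball (hell.mono hsub) (hK.mono hsub)
    (fun x hx => hv0 x (hball (hsub hx))) (hsuper.mono (hsub.trans hball)) (half_pos hR)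
    (closedBall_subset_ball (half_lt_self hR)) hn hy hyP.2⟩

end StrongMaximumPrinciple

/-! ### The flux and its derivative -/

section Flux

variable {E : Type*} [NormedAddCommGroup E] {a : ℝ → ℝ}

theorem continuous_comp_norm (ha : ContinuousOn a (Ici 0)) : Continuous fun p : E => a ‖p‖ :=
  ha.comp_continuous continuous_norm norm_nonneg

/- At `p = 0` the value of `deriv a` is irrelevant, since it is multiplied by `‖p‖`. -/
theorem continuous_deriv_norm_mul_norm (ha : ContDiffOn ℝ 1 a (Ici 0)) :
    Continuous fun p : E => deriv a ‖p‖ * ‖p‖ := by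
  have hcont : Continuous fun p : E => derivWithin a (Ici 0) ‖p‖ * ‖p‖ :=
    ((ha.continuousOn_derivWithin (uniqueDiffOn_Ici 0) le_rfl).comp_continuous continuous_norm
      norm_nonneg).mul continuous_norm
  refine hcont.congr fun p => ?_
  rcases eq_or_ne p 0 with rfl | hp
  · simp
  · rw [derivWithin_of_mem_nhds (Ici_mem_nhds (norm_pos_iff.2 hp))]

variable [InnerProductSpace ℝ E]

/-- The derivative of the flux `p ↦ a(|p|) p` at `p`, that is, the matrix `A(p)`, as a bundled
linear map. -/
def fluxDeriv (a : ℝ → ℝ) (p : E) : E →L[ℝ] E :=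
  a ‖p‖ • ContinuousLinearMap.id ℝ E + (deriv a ‖p‖ / ‖p‖) • InnerProductSpace.rankOne ℝ p p

theorem fluxDeriv_apply (a : ℝ → ℝ) (p q : 𝔼 n) : fluxDeriv a p q = Aop a p q := by
  simp [fluxDeriv, Aop, smul_smul]

theorem inner_fluxDeriv (a : ℝ → ℝ) (p q r : E) :
    ⟪fluxDeriv a p q, r⟫ = a ‖p‖ * ⟪q, r⟫ + deriv a ‖p‖ / ‖p‖ * (⟪p, q⟫ * ⟪p, r⟫) := by
  simp [fluxDeriv, inner_add_left, real_inner_smul_left]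

theorem inner_fluxDeriv_comm (a : ℝ → ℝ) (p q r : E) :
    ⟪fluxDeriv a p q, r⟫ = ⟪fluxDeriv a p r, q⟫ := by
  rw [inner_fluxDeriv, inner_fluxDeriv, real_inner_comm r q, mul_comm ⟪p, q⟫]

/- `|p|² ⟨A(p) q, q⟩ = a(|p|) (|p|² |q|² - ⟨p, q⟩²) + (t a)'(|p|) ⟨p, q⟩²`. -/
theorem inner_fluxDeriv_self_pos {p q : E} (ha : 0 < a ‖p‖) (ha' : 0 < lam1 a ‖p‖) (hq : q ≠ 0) :
    0 < ⟪fluxDeriv a p q, q⟫ := by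
  have hq0 := norm_pos_iff.2 hq
  rw [inner_fluxDeriv, real_inner_self_eq_norm_sq]
  rcases eq_or_ne p 0 with rfl | hp
  · simpa using mul_pos ha (pow_pos hq0 2)
  have hp0 := norm_ne_zero_iff.2 hp
  have hsplit : ‖p‖ ^ 2 * (a ‖p‖ * ‖q‖ ^ 2 + deriv a ‖p‖ / ‖p‖ * (⟪p, q⟫ * ⟪p, q⟫)) =
      a ‖p‖ * ((‖p‖ * ‖q‖) ^ 2 - ⟪p, q⟫ ^ 2) + lam1 a ‖p‖ * ⟪p, q⟫ ^ 2 := by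
    rw [lam1]
    field_simp [hp0]
    ring
  have hcs : ⟪p, q⟫ ^ 2 ≤ (‖p‖ * ‖q‖) ^ 2 := sq_le_sq.2 (by
    simpa [abs_mul] using abs_real_inner_le_norm p q)
  refine pos_of_mul_pos_right (a := ‖p‖ ^ 2) ?_ (sq_nonneg _)
  rw [hsplit]
  rcases eq_or_ne ⟪p, q⟫ 0 with h0 | h0
  · rw [h0]
    have : 0 < a ‖p‖ * (‖p‖ * ‖q‖) ^ 2 := by positivity
    linarith
  · exact add_pos_of_nonneg_of_pos (mul_nonneg ha.le (sub_nonneg.2 hcs)) (by positivity)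

theorem norm_deriv_div_smul_rankOne (a : ℝ → ℝ) (p : E) :
    ‖(deriv a ‖p‖ / ‖p‖) • InnerProductSpace.rankOne ℝ p p‖ = |deriv a ‖p‖ * ‖p‖| := by
  rcases eq_or_ne p 0 with rfl | hp
  · simp
  rw [norm_smul, InnerProductSpace.norm_rankOne, Real.norm_eq_abs, abs_div, abs_mul, abs_norm]
  field_simp [norm_ne_zero_iff.2 hp]

variable (ha : ContDiffOn ℝ 1 a (Ici 0))

include ha

theorem continuous_fluxDeriv : Continuous fun p : E => fluxDeriv a p := by
  refine ((continuous_comp_norm ha.continuousOn).smul continuous_const).add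
    (continuous_iff_continuousAt.2 fun p => ?_)
  rcases eq_or_ne p 0 with rfl | hp
  · have hlim := (continuous_deriv_norm_mul_norm ha).abs.tendsto (0 : E)
    rw [norm_zero, mul_zero, abs_zero] at hlim
    rw [ContinuousAt, norm_zero, div_zero, zero_smul]
    exact squeeze_zero_norm (fun q => (norm_deriv_div_smul_rankOne a q).le) hlim
  · have hsq : ContinuousAt (fun q : E => (deriv a ‖q‖ * ‖q‖) / ‖q‖ ^ 2) p :=
      (continuous_deriv_norm_mul_norm ha).continuousAt.div (by fun_prop)
        (pow_ne_zero 2 (norm_ne_zero_iff.2 hp))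
    have hrank : Continuous fun q : E => InnerProductSpace.rankOne ℝ q q :=
      (InnerProductSpace.rankOne ℝ (E := E) (F := E)).continuous₂.comp
        (continuous_id.prodMk continuous_id)
    refine (hsq.smul hrank.continuousAt).congr ?_
    filter_upwards [isOpen_ne.mem_nhds hp] with q hq
    refine congrArg (fun t : ℝ => t • InnerProductSpace.rankOne ℝ q q) ?_
    field_simp [norm_ne_zero_iff.2 hq]

theorem hasFDerivAt_flux (p : E) : HasFDerivAt (fun p : E => a ‖p‖ • p) (fluxDeriv a p) p := by
  rcases eq_or_ne p 0 with rfl | hp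
  · rw [hasFDerivAt_iff_isLittleO_nhds_zero]
    have hlim : Tendsto (fun q : E => a ‖q‖ - a 0) (𝓝 0) (𝓝 0) := by
      simpa using ((continuous_comp_norm (E := E) ha.continuousOn).fun_sub
        (continuous_const (y := a 0))).tendsto 0
    simpa [fluxDeriv, sub_smul] using
      ((Asymptotics.isLittleO_one_iff ℝ).2 hlim).smul_isBigO (Asymptotics.isBigO_refl id (𝓝 0))
  · have hp0 := norm_pos_iff.2 hp
    have hnorm : HasFDerivAt (fun q : E => ‖q‖) (‖p‖⁻¹ • innerSL ℝ p) p := by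
      have := (hasStrictFDerivAt_norm_sq p).hasFDerivAt.sqrt (by positivity)
      simp only [Real.sqrt_sq (norm_nonneg _)] at this
      refine this.congr_fderiv ?_
      ext q
      simp
      field_simp
    have ha' := ((ha.contDiffAt (Ici_mem_nhds hp0)).differentiableAt one_ne_zero).hasDerivAt
    refine ((ha'.comp_hasFDerivAt p hnorm).smul (hasFDerivAt_id p)).congr_fderiv ?_
    ext q
    simp [fluxDeriv, smul_smul, div_eq_mul_inv, mul_assoc]

theorem contDiff_flux : ContDiff ℝ 1 fun p : E => a ‖p‖ • p := by
  refine contDiff_one_iff_fderiv.2 ⟨fun p => (hasFDerivAt_flux ha p).differentiableAt, ?_⟩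
  rw [(funext fun p => (hasFDerivAt_flux ha p).fderiv :
    fderiv ℝ (fun p : E => a ‖p‖ • p) = fluxDeriv a)]
  exact continuous_fluxDeriv ha

end Flux

section Hessian

variable {E : Type*} [NormedAddCommGroup E] [InnerProductSpace ℝ E] [CompleteSpace E]
  {u : E → ℝ} {Ω : Set E} {x : E}

theorem contDiffOn_gradient {m k : WithTop ℕ∞} (hΩ : IsOpen Ω) (hu : ContDiffOn ℝ k u Ω)
    (hmk : m + 1 ≤ k) : ContDiffOn ℝ m (gradient u) Ω :=
  (InnerProductSpace.toDual ℝ E).symm.contDiff.comp_contDiffOn (hu.fderiv_of_isOpen hΩ hmk)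

theorem inner_fderiv_gradient (hu : ContDiffAt ℝ 2 u x) (y z : E) :
    ⟪fderiv ℝ (gradient u) x y, z⟫ = fderiv ℝ (fderiv ℝ u) x y z := by
  have hfderiv : DifferentiableAt ℝ (fderiv ℝ u) x :=
    (hu.fderiv_right (m := 1) le_rfl).differentiableAt one_ne_zero
  have hgrad : DifferentiableAt ℝ (gradient u) x :=
    (InnerProductSpace.toDual ℝ E).symm.differentiable.differentiableAt.comp x hfderiv
  have hfun : (fun x => ⟪gradient u x, z⟫) = fun x => fderiv ℝ u x z :=
    funext fun x => inner_gradient_left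
  have h := congrArg (fun g => fderiv ℝ g x y) hfun
  rw [fderiv_inner_apply ℝ hgrad (differentiableAt_const z),
    fderiv_clm_apply hfderiv (differentiableAt_const z)] at h
  simpa only [fderiv_fun_const, Pi.zero_apply, zero_apply, inner_zero_right, zero_add,
    ContinuousLinearMap.comp_zero, ContinuousLinearMap.flip_apply] using h

/-- The derivative `⟨∇u, e⟩` of `u` in the direction `e`. -/
def dirDeriv (u : E → ℝ) (e x : E) : ℝ := ⟪gradient u x, e⟫

theorem dirDeriv_eq_fderiv (u : E → ℝ) (e x : E) : dirDeriv u e x = fderiv ℝ u x e :=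
  inner_gradient_left

theorem gradient_dirDeriv (hu : ContDiffAt ℝ 2 u x) (e : E) :
    gradient (dirDeriv u e) x = fderiv ℝ (gradient u) x e := by
  refine gradient_eq_of_fderiv_apply fun y => ?_
  rw [funext (dirDeriv_eq_fderiv u e), inner_fderiv_gradient hu,
    fderiv_clm_apply _ (differentiableAt_const e)]
  · simp only [fderiv_fun_const, Pi.zero_apply, ContinuousLinearMap.comp_zero, zero_add,
      ContinuousLinearMap.flip_apply]
    exact (hu.isSymmSndFDerivAt (by simp)).eq y e
  · exact (hu.fderiv_right (m := 1) le_rfl).differentiableAt one_ne_zero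

theorem contDiffOn_dirDeriv (hΩ : IsOpen Ω) (hu : ContDiffOn ℝ 2 u Ω) (e : E) :
    ContDiffOn ℝ 1 (dirDeriv u e) Ω :=
  (contDiffOn_gradient hΩ hu le_rfl).inner ℝ contDiffOn_const

end Hessian

/-! ### The linearized equation -/

section TranslatedIntegral

variable {E : Type*} [NormedAddCommGroup E] [NormedSpace ℝ E] {S : Set E}

theorem eventually_add_smul_mem_cthickening {δ : ℝ} (hδ : 0 < δ) (S : Set E) (e : E) :
    ∀ᶠ t : ℝ in 𝓝 0, ∀ x ∈ S, x + t • e ∈ cthickening δ S := by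
  have hlim : Tendsto (fun t : ℝ => ‖t • e‖) (𝓝 0) (𝓝 0) := by
    simpa using ((continuous_id.smul continuous_const).norm (E := E)).tendsto (0 : ℝ)
  filter_upwards [hlim.eventually_le_const hδ] with t ht x hx
  exact mem_cthickening_of_dist_le _ x δ S hx (by simpa using ht)

variable {F : Type*} [NormedAddCommGroup F] [InnerProductSpace ℝ F] [ProperSpace E]
  [MeasurableSpace E] [BorelSpace E] {μ : Measure E} [IsFiniteMeasureOnCompacts μ]
  {Ω : Set E} {G : E → F} {g : E → F}

theorem hasDerivAt_setIntegral_inner_translate (hΩ : IsOpen Ω) (hG : ContDiffOn ℝ 1 G Ω)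
    (hS : IsCompact S) (hSΩ : S ⊆ Ω) (hg : MemLp g ∞ (μ.restrict S)) (e : E) :
    HasDerivAt (fun t : ℝ => ∫ x in S, ⟪G (x + t • e), g x⟫ ∂μ)
      (∫ x in S, ⟪fderiv ℝ G x e, g x⟫ ∂μ) 0 := by
  obtain ⟨δ, hδ, hδΩ⟩ := hS.exists_cthickening_subset_open hΩ hSΩ
  have hG' : ContinuousOn (fderiv ℝ G) Ω := hG.continuousOn_fderiv_of_isOpen hΩ le_rfl
  obtain ⟨C, hC⟩ := hS.cthickening.exists_bound_of_continuousOn (hG'.mono hδΩ)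
  have : IsFiniteMeasure (μ.restrict S) := isFiniteMeasure_restrict.2 hS.measure_ne_top
  have hnhds := eventually_add_smul_mem_cthickening hδ S e
  have hmeas : ∀ t : ℝ, (∀ x ∈ S, x + t • e ∈ cthickening δ S) → ∀ {H : E → F},
      ContinuousOn H Ω → MemLp (fun x => ⟪H (x + t • e), g x⟫) ∞ (μ.restrict S) := by
    intro t ht H hH
    refine (innerSL ℝ).memLp_of_bilin ∞ (memLp_top_restrict_of_continuousOn hS ?_) hg
    exact hH.comp (by fun_prop) fun x hx => hδΩ (ht x hx)
  have h0 : ∀ x ∈ S, x + (0 : ℝ) • e ∈ cthickening δ S := hnhds.self_of_nhds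
  have hderiv := (hasDerivAt_integral_of_dominated_loc_of_deriv_le (𝕜 := ℝ) (μ := μ.restrict S)
    (F := fun t x => ⟪G (x + t • e), g x⟫) (F' := fun t x => ⟪fderiv ℝ G (x + t • e) e, g x⟫)
    (bound := fun x => C * ‖e‖ * ‖g x‖) hnhds
    (hnhds.mono fun t ht => (hmeas t ht hG.continuousOn).aestronglyMeasurable)
    ((hmeas 0 h0 hG.continuousOn).integrable le_top)
    (hmeas 0 h0 (hG'.clm_apply continuousOn_const)).aestronglyMeasurable ?_
    ((hg.integrable le_top).norm.const_mul _) ?_).2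
  · simpa only [zero_smul, add_zero] using hderiv
  · filter_upwards [ae_restrict_mem hS.measurableSet] with x hx t ht
    refine (norm_inner_le_norm _ _).trans ?_
    gcongr
    exact (ContinuousLinearMap.le_opNorm _ _).trans (by gcongr; exact hC _ (ht x hx))
  · filter_upwards [ae_restrict_mem hS.measurableSet] with x hx t ht
    have hGx := ((hG.contDiffAt (hΩ.mem_nhds (hδΩ (ht x hx)))).differentiableAt
      one_ne_zero).hasFDerivAt
    have hline : HasDerivAt (fun t : ℝ => x + t • e) e t := by
      simpa using ((hasDerivAt_id t).smul_const e).const_add x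
    simpa using (hGx.comp_hasDerivAt t hline).inner ℝ (hasDerivAt_const t (g x))

end TranslatedIntegral

section Linearization

theorem setIntegral_mul_eq_integral {S : Set (𝔼 n)} {ξ : 𝔼 n → ℝ} (h : tsupport ξ ⊆ S)
    (c : 𝔼 n → ℝ) : ∫ x in S, c x * ξ x = ∫ x, c x * ξ x :=
  setIntegral_eq_integral_of_forall_compl_eq_zero fun x hx => by
    rw [image_eq_zero_of_notMem_tsupport fun hx' => hx (h hx'), mul_zero]

theorem setIntegral_inner_gradient_eq_integral {S : Set (𝔼 n)} {ξ : 𝔼 n → ℝ} (h : tsupport ξ ⊆ S)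
    (p : 𝔼 n → 𝔼 n) : ∫ x in S, ⟪p x, gradient ξ x⟫ = ∫ x, ⟪p x, gradient ξ x⟫ :=
  setIntegral_eq_integral_of_forall_compl_eq_zero fun x hx => by
    rw [gradient_of_notMem_tsupport fun hx' => hx (h hx'), inner_zero_right]

theorem gradient_comp_sub (ξ : 𝔼 n → ℝ) (x h : 𝔼 n) :
    gradient (fun x => ξ (x - h)) x = gradient ξ (x - h) := by
  rw [gradient, fderiv_comp_sub, gradient]

theorem IsTestOn.eventually_translate {U : Set (𝔼 n)} {ξ : 𝔼 n → ℝ} (hξ : IsTestOn U ξ)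
    (hU : IsOpen U) (e : 𝔼 n) : ∀ᶠ t : ℝ in 𝓝 0, IsTestOn U fun x => ξ (x - t • e) := by
  obtain ⟨⟨K, hK⟩, hc, hξU⟩ := hξ
  obtain ⟨δ, hδ, hδU⟩ := hc.isCompact.exists_cthickening_subset_open hU hξU
  filter_upwards [eventually_add_smul_mem_cthickening hδ (tsupport ξ) e] with t ht
  refine ⟨⟨K * (1 + 0), hK.comp (LipschitzWith.id.sub (LipschitzWith.const _))⟩,
    hc.comp_homeomorph (Homeomorph.subRight (t • e)), fun x hx => hδU ?_⟩
  have hx' : x - t • e ∈ tsupport ξ :=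
    (tsupport_comp_eq_preimage ξ (Homeomorph.subRight (t • e))).subset hx
  simpa using ht _ hx'

variable {a f : ℝ → ℝ} {u ξ : 𝔼 n → ℝ} {Ω : Set (𝔼 n)}

namespace IsWeakSolution

theorem setIntegral_translate (hsol : IsWeakSolution a f Ω u) {h : 𝔼 n}
    (hξ : IsTestOn Ω fun x => ξ (x - h)) :
    ∫ x in tsupport ξ, ⟪a ‖gradient u (x + h)‖ • gradient u (x + h), gradient ξ x⟫ =
      ∫ x in tsupport ξ, f (u (x + h)) * ξ x := by
  have hweak := hsol _ hξ
  simp only [← real_inner_smul_left] at hweak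
  rw [setIntegral_inner_gradient_eq_integral hξ.2.2, setIntegral_mul_eq_integral hξ.2.2,
    ← integral_add_right_eq_self _ h, ← integral_add_right_eq_self (fun x => f (u x) * _) h]
    at hweak
  simp only [gradient_comp_sub, add_sub_cancel_right] at hweak
  rwa [setIntegral_inner_gradient_eq_integral subset_rfl, setIntegral_mul_eq_integral subset_rfl]

theorem integral_dirDeriv (hsol : IsWeakSolution a f Ω u) (hΩ : IsOpen Ω)
    (ha : ContDiffOn ℝ 1 a (Ici 0)) (hf : ContDiff ℝ 1 f) (hu : ContDiffOn ℝ 2 u Ω) (e : 𝔼 n)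
    (hξ : IsTestOn Ω ξ) :
    ∫ x, ⟪fluxDeriv a (gradient u x) (gradient (dirDeriv u e) x), gradient ξ x⟫ =
      ∫ x, deriv f (u x) * dirDeriv u e x * ξ x := by
  have hS : IsCompact (tsupport ξ) := hξ.2.1
  have hgrad : ContDiffOn ℝ 1 (gradient u) Ω := contDiffOn_gradient hΩ hu le_rfl
  have hu1 : ContDiffOn ℝ 1 u Ω := hu.of_le one_le_two
  have hflux := hasDerivAt_setIntegral_inner_translate (μ := volume) hΩ
    ((contDiff_flux ha).comp_contDiffOn hgrad) hS hξ.2.2 (hξ.memLp_top_gradient _) e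
  have hsource := hasDerivAt_setIntegral_inner_translate (μ := volume) hΩ
    (hf.comp_contDiffOn hu1) hS hξ.2.2
    (memLp_top_restrict_of_continuousOn hS hξ.locallyLipschitz.continuous.continuousOn) e
  simp only [RCLike.inner_apply, conj_trivial, mul_comm (ξ _)] at hsource
  have heq := (hflux.congr_of_eventuallyEq ((hξ.eventually_translate hΩ e).mono fun t ht =>
    (hsol.setIntegral_translate ht).symm)).unique hsource
  rw [← setIntegral_inner_gradient_eq_integral subset_rfl,
    ← setIntegral_mul_eq_integral subset_rfl]
  refine (setIntegral_congr_fun hS.measurableSet fun x hx => ?_).trans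
    (heq.trans (setIntegral_congr_fun hS.measurableSet fun x hx => ?_))
  · have hxΩ := hΩ.mem_nhds (hξ.2.2 hx)
    have hgx := ((hgrad.contDiffAt hxΩ).differentiableAt one_ne_zero).hasFDerivAt
    rw [gradient_dirDeriv (hu.contDiffAt hxΩ),
      ((hasFDerivAt_flux ha (gradient u x)).comp x hgx).fderiv, ContinuousLinearMap.comp_apply]
  · have hux := ((hu1.contDiffAt (hΩ.mem_nhds (hξ.2.2 hx))).differentiableAt
      one_ne_zero).hasFDerivAt
    rw [((hf.differentiable one_ne_zero (u x)).hasDerivAt.comp_hasFDerivAt x hux).fderiv,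
      dirDeriv_eq_fderiv, smul_apply, smul_eq_mul]

end IsWeakSolution

end Linearization

/-! ### Supersolutions from stability -/

section Truncation

/-- The truncation `(v - ε)⁺`. -/
def excess {X : Type*} (v : X → ℝ) (ε : ℝ) (x : X) : ℝ := max (v x - ε) 0

theorem excess_eq_ite {X : Type*} (v : X → ℝ) (ε : ℝ) (x : X) :
    excess v ε x = if ε < v x then v x - ε else 0 := by
  unfold excess
  split_ifs with h
  · exact max_eq_left (sub_pos.2 h).le
  · exact max_eq_right (sub_nonpos.2 (not_lt.1 h))

theorem excess_nonneg {X : Type*} (v : X → ℝ) (ε : ℝ) (x : X) : 0 ≤ excess v ε x :=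
  le_max_right _ _

theorem excess_le {X : Type*} {v : X → ℝ} {ε : ℝ} {x : X} (hv : 0 ≤ v x) (hε : 0 ≤ ε) :
    excess v ε x ≤ v x :=
  max_le (sub_le_self _ hε) hv

theorem mul_excess {X : Type*} (v : X → ℝ) (ε : ℝ) (x : X) :
    v x * excess v ε x = excess v ε x * excess v ε x + ε * excess v ε x := by
  rw [excess_eq_ite]
  split_ifs <;> ring

variable {E : Type*} [NormedAddCommGroup E] [InnerProductSpace ℝ E]

theorem gradient_eq_zero_of_isLocalMin [CompleteSpace E] {v : E → ℝ} {x : E}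
    (h : IsLocalMin v x) : gradient v x = 0 := by
  rw [gradient, h.fderiv_eq_zero, map_zero]

theorem gradient_excess [CompleteSpace E] {v : E → ℝ} {x : E} (hv : ContinuousAt v x)
    (ε : ℝ) : gradient (excess v ε) x = if ε < v x then gradient v x else 0 := by
  split_ifs with h
  · have hev : excess v ε =ᶠ[𝓝 x] fun y => v y - ε := by
      filter_upwards [hv.eventually_const_lt h] with y hy
      rw [excess_eq_ite, if_pos hy]
    rw [gradient, gradient, hev.fderiv_eq, fderiv_sub_const]
  · refine gradient_eq_zero_of_isLocalMin (Eventually.of_forall fun y => ?_)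
    rw [excess_eq_ite, if_neg h]
    exact le_max_right _ _

theorem ae_differentiableAt_of_locallyLipschitzOn [FiniteDimensional ℝ E] [MeasurableSpace E]
    [BorelSpace E] {μ : Measure E} [μ.IsAddHaarMeasure] {U : Set E} {v : E → ℝ} (hU : IsOpen U)
    (hv : LocallyLipschitzOn U v) : ∀ᵐ x ∂μ, x ∈ U → DifferentiableAt ℝ v x := by
  refine measure_null_of_locally_null _ fun x hx => ?_
  obtain ⟨hxU, -⟩ := Classical.not_imp.1 hx
  obtain ⟨K, t, ht, hK⟩ := hv hxU
  rw [hU.nhdsWithin_eq hxU] at ht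
  refine ⟨interior t ∩ {y | ¬(y ∈ U → DifferentiableAt ℝ v y)},
    inter_comm _ _ ▸ inter_mem_nhdsWithin _ (interior_mem_nhds.2 ht), ?_⟩
  refine measure_mono_null (fun y hy => ?_)
    (ae_iff.1 ((hK.mono interior_subset).ae_differentiableWithinAt_of_mem (μ := μ)))
  exact fun hdiff => hy.2 fun _ => (hdiff hy.1).differentiableAt (isOpen_interior.mem_nhds hy.1)

/- The difference of the two sides is `⟪A (g • q - t • r), g • q - t • r⟫`. -/
theorem quadratic_add_le {A : E →L[ℝ] E} (hsymm : ∀ p q, ⟪A p, q⟫ = ⟪A q, p⟫)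
    (hA : ∀ p, 0 ≤ ⟪A p, p⟫) (p q r : E) (c g φ ξ t : ℝ) :
    ⟪A (φ • p + g • q + t • r), φ • p + g • q + t • r⟫ -
        c * (φ * g + t * ξ) * (φ * g + t * ξ) ≤
      ⟪A p, φ • (φ • p + g • q) + (φ * g) • q⟫ - c * g * (φ * (φ * g)) + 2 * (g ^ 2 * ⟪A q, q⟫) +
        2 * t * (φ * (⟪A p, r⟫ - c * g * ξ)) + t ^ 2 * (⟪A r, r⟫ + (⟪A r, r⟫ - c * ξ * ξ)) := by
  have h := hA (g • q - t • r)
  simp only [map_add, map_sub, map_smul, inner_add_left, inner_add_right, inner_sub_left,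
    inner_sub_right, real_inner_smul_left, real_inner_smul_right, hsymm q p, hsymm r p,
    hsymm r q] at h ⊢
  linarith

end Truncation

section Stability

variable {A : 𝔼 n → 𝔼 n →L[ℝ] 𝔼 n} {c v φ ξ : 𝔼 n → ℝ} {Ω : Set (𝔼 n)} {ε : ℝ}

/-- The integrand of the bilinear form associated with the operator `v ↦ -(div (A ∇v) + c v)`. -/
def formDensity (A : 𝔼 n → 𝔼 n →L[ℝ] 𝔼 n) (c v ξ : 𝔼 n → ℝ) (x : 𝔼 n) : ℝ :=
  ⟪A x (gradient v x), gradient ξ x⟫ - c x * v x * ξ x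

theorem formDensity_of_notMem_tsupport {x : 𝔼 n} (hx : x ∉ tsupport ξ) :
    formDensity A c v ξ x = 0 := by
  rw [formDensity, gradient_of_notMem_tsupport hx, image_eq_zero_of_notMem_tsupport hx,
    inner_zero_right, mul_zero, sub_zero]

theorem IsTestOn.integrable_formDensity (hξ : IsTestOn Ω ξ) (hΩ : IsOpen Ω)
    (hA : ContinuousOn A Ω) (hc : ContinuousOn c Ω) (hv : LocallyLipschitzOn Ω v) :
    Integrable (formDensity A c v ξ) :=
  (hξ.integrable_inner_gradient hΩ hA hv).sub (hξ.integrable_mul (hc.mul hv.continuousOn))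

theorem IsTestOn.integral_formDensity (hξ : IsTestOn Ω ξ) (hΩ : IsOpen Ω)
    (hA : ContinuousOn A Ω) (hc : ContinuousOn c Ω) (hv : LocallyLipschitzOn Ω v) :
    ∫ x, formDensity A c v ξ x =
      (∫ x, ⟪A x (gradient v x), gradient ξ x⟫) - ∫ x, c x * v x * ξ x :=
  integral_sub (hξ.integrable_inner_gradient hΩ hA hv)
    (hξ.integrable_mul (hc.mul hv.continuousOn))

theorem mul_formDensity (x : 𝔼 n) : φ x * formDensity A c v ξ x =
    formDensity (fun x => φ x • A x) (fun x => φ x * c x) v ξ x := by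
  rw [formDensity, formDensity, smul_apply, real_inner_smul_left]
  ring

theorem IsTestOn.integrable_mul_formDensity (hξ : IsTestOn Ω ξ) (hΩ : IsOpen Ω)
    (hA : ContinuousOn A Ω) (hc : ContinuousOn c Ω) (hv : LocallyLipschitzOn Ω v)
    (hφ : Continuous φ) : Integrable fun x => φ x * formDensity A c v ξ x := by
  simp_rw [mul_formDensity]
  exact hξ.integrable_formDensity hΩ (hφ.continuousOn.smul hA) (hφ.continuousOn.mul hc) hv

theorem IsTestOn.add {U : Set (𝔼 n)} {ξ η : 𝔼 n → ℝ} (hξ : IsTestOn U ξ) (hη : IsTestOn U η) :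
    IsTestOn U fun x => ξ x + η x :=
  let ⟨_, hK⟩ := hξ.1
  let ⟨_, hL⟩ := hη.1
  ⟨⟨_, hK.add hL⟩, hξ.2.1.add hη.2.1,
    (tsupport_add ξ η).trans (union_subset hξ.2.2 hη.2.2)⟩

theorem IsTestOn.mul_locallyLipschitz {U : Set (𝔼 n)} {ξ f : 𝔼 n → ℝ} (hξ : IsTestOn U ξ)
    (hf : LocallyLipschitz f) : IsTestOn U fun x => ξ x * f x :=
  ⟨((hξ.mono (subset_univ _)).mul_locallyLipschitzOn isOpen_univ hf.locallyLipschitzOn).1,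
    hξ.2.1.mul_right, (tsupport_mul_subset_left (f := ξ) (g := f)).trans hξ.2.2⟩

/-- `φ` localizes the nonnegative function `v`: truncating `v` at a positive level and multiplying
by `φ` gives a test function in `{v ≠ 0}`, although `φ` itself need not be supported there, and the
error terms of the stability inequality tested with `φ * v` are integrable. -/
structure IsLocalizer (A : 𝔼 n → 𝔼 n →L[ℝ] 𝔼 n) (c v φ : 𝔼 n → ℝ) : Prop where
  lipschitz : ∃ K, LipschitzWith K φ
  isTestOn : ∀ ε > 0, IsTestOn (Function.support v) fun x => φ x * excess v ε x
  integrable_potential : Integrable fun x => c x * v x * φ x ^ 2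
  integrable_energy : Integrable fun x => v x ^ 2 * ⟪A x (gradient φ x), gradient φ x⟫


section

variable (hΩ : IsOpen Ω) (hv : LocallyLipschitzOn Ω v) (hv0 : ∀ x, 0 ≤ v x)
  (hvΩ : Function.support v ⊆ Ω) (hA : ContinuousOn A Ω) (hc : ContinuousOn c Ω)
  (hAsymm : ∀ x ∈ Ω, ∀ p q, ⟪A x p, q⟫ = ⟪A x q, p⟫) (hApos : ∀ x ∈ Ω, ∀ p, 0 ≤ ⟪A x p, p⟫)
  (hφ : IsLocalizer A c v φ) (hξ : IsTestOn Ω ξ)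

include hv in
theorem locallyLipschitzOn_excess (ε : ℝ) : LocallyLipschitzOn Ω (excess v ε) :=
  locallyLipschitzOn_max (locallyLipschitzOn_comp (g := fun s => s - ε)
    (fun _ _ => (contDiff_id.sub contDiff_const).contDiffAt) hv)
    (LocallyLipschitz.const 0).locallyLipschitzOn

include hφ in
theorem IsLocalizer.ae_differentiableAt : ∀ᵐ x, DifferentiableAt ℝ φ x :=
  let ⟨_, hK⟩ := hφ.lipschitz
  hK.ae_differentiableAt

include hφ in
theorem IsLocalizer.isTestOn_mul_mul (hε : 0 < ε) :
    IsTestOn (Function.support v) fun x => φ x * (φ x * excess v ε x) := by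
  obtain ⟨K, hK⟩ := hφ.lipschitz
  simpa only [mul_comm] using (hφ.isTestOn ε hε).mul_locallyLipschitz hK.locallyLipschitz

include hΩ hv hv0 in
theorem abs_formDensity_excess_le {x : 𝔼 n} (hx : x ∈ Ω) (hε : 0 ≤ ε) :
    |formDensity A c (excess v ε) ξ x| ≤
        |⟪A x (gradient v x), gradient ξ x⟫| + |c x * v x * ξ x| := by
  have hgrad := gradient_excess (hv.continuousOn.continuousAt (hΩ.mem_nhds hx)) ε
  refine (abs_sub _ _).trans (add_le_add ?_ ?_)
  · rw [hgrad]
    split_ifs <;> simp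
  · simp only [abs_mul, abs_of_nonneg (hv0 x), abs_of_nonneg (excess_nonneg v ε x)]
    gcongr
    exact excess_le (hv0 x) hε

include hΩ hv hv0 in
theorem tendsto_formDensity_excess {x : 𝔼 n} (hx : x ∈ Ω) :
    Tendsto (fun ε => formDensity A c (excess v ε) ξ x) (𝓝[>] 0) (𝓝 (formDensity A c v ξ x)) := by
  have hgrad := gradient_excess (hv.continuousOn.continuousAt (hΩ.mem_nhds hx))
  have hgrad' : ∀ᶠ ε in 𝓝[>] (0 : ℝ), gradient (excess v ε) x = gradient v x := by
    rcases (hv0 x).eq_or_lt with h0 | hpos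
    · filter_upwards [self_mem_nhdsWithin] with ε hε
      rw [hgrad, if_neg (h0 ▸ (mem_Ioi.1 hε).not_gt),
        gradient_eq_zero_of_isLocalMin (Eventually.of_forall fun y => h0 ▸ hv0 y)]
    · filter_upwards [mem_nhdsWithin_of_mem_nhds (Iio_mem_nhds hpos)] with ε hε
      rw [hgrad, if_pos (mem_Iio.1 hε)]
  have hval : Tendsto (fun ε => excess v ε x) (𝓝[>] 0) (𝓝 (v x)) := by
    have hcont : Continuous fun ε => excess v ε x :=
      (continuous_const.sub continuous_id).max continuous_const
    simpa [excess, hv0 x] using (hcont.tendsto 0).mono_left nhdsWithin_le_nhds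
  refine Tendsto.congr' (hgrad'.mono fun ε hε => ?_)
    (tendsto_const_nhds.sub ((hval.const_mul (c x)).mul_const (ξ x)))
  simp only [formDensity, hε]

include hΩ hv hv0 hA hc hξ in
theorem tendsto_integral_mul_formDensity_excess (hφ : Continuous φ) :
    Tendsto (fun ε => ∫ x, φ x * formDensity A c (excess v ε) ξ x) (𝓝[>] 0)
      (𝓝 (∫ x, φ x * formDensity A c v ξ x)) := by
  have hzero : ∀ x ∉ Ω, ∀ w, formDensity A c w ξ x = 0 := fun x hx w =>
    formDensity_of_notMem_tsupport fun h => hx (hξ.2.2 h)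
  refine tendsto_integral_filter_of_dominated_convergence
    (fun x => |φ x * ⟪A x (gradient v x), gradient ξ x⟫| + |φ x * (c x * v x * ξ x)|)
    (Eventually.of_forall fun ε => (hξ.integrable_mul_formDensity hΩ hA hc
      (locallyLipschitzOn_excess hv ε) hφ).aestronglyMeasurable) ?_ ?_ ?_
  · filter_upwards [self_mem_nhdsWithin] with ε hε
    refine Eventually.of_forall fun x => ?_
    rw [Real.norm_eq_abs, abs_mul, abs_mul, abs_mul (φ x), ← mul_add]
    by_cases hx : x ∈ Ω
    · have := abs_formDensity_excess_le (A := A) (c := c) (ξ := ξ) hΩ hv hv0 hx (mem_Ioi.1 hε).le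
      gcongr
    · rw [hzero x hx, abs_zero, mul_zero]
      positivity
  · have hflux : Integrable fun x => φ x * ⟪A x (gradient v x), gradient ξ x⟫ := by
      simpa [real_inner_smul_left] using
        hξ.integrable_inner_gradient hΩ (hφ.continuousOn.smul hA) hv
    have hpot : Integrable fun x => φ x * (c x * v x * ξ x) := by
      simpa [mul_assoc] using hξ.integrable_mul (hφ.continuousOn.mul (hc.mul hv.continuousOn))
    exact hflux.abs.add hpot.abs
  · refine Eventually.of_forall fun x => Tendsto.const_mul _ ?_
    by_cases hx : x ∈ Ω
    · exact tendsto_formDensity_excess hΩ hv hv0 hx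
    · simp only [hzero x hx]
      exact tendsto_const_nhds

include hΩ hv hv0 hAsymm hApos

theorem quadratic_add_le_of_differentiableAt (hε : 0 < ε) (t : ℝ) {x : 𝔼 n} (hx : x ∈ Ω)
    (hφx : DifferentiableAt ℝ φ x) (hξx : DifferentiableAt ℝ ξ x)
    (hgx : DifferentiableAt ℝ (excess v ε) x) :
    formDensity A c (fun x => φ x * excess v ε x + ξ x * t)
        (fun x => φ x * excess v ε x + ξ x * t) x ≤
      formDensity A c v (fun x => φ x * (φ x * excess v ε x)) x + ε * |c x * v x * φ x ^ 2| +
        2 * (v x ^ 2 * ⟪A x (gradient φ x), gradient φ x⟫) +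
        2 * t * (φ x * formDensity A c (excess v ε) ξ x) +
        t ^ 2 * (⟪A x (gradient ξ x), gradient ξ x⟫ + formDensity A c ξ ξ x) := by
  have hgrad := gradient_excess (hv.continuousOn.continuousAt (hΩ.mem_nhds hx)) ε
  have hψ : gradient (fun x => φ x * excess v ε x + ξ x * t) x =
      φ x • gradient (excess v ε) x + excess v ε x • gradient φ x + t • gradient ξ x := by
    rw [← gradient_mul hφx hgx, gradient, fderiv_fun_add (hφx.fun_mul hgx) (hξx.mul_const t),
      map_add, fderiv_mul_const hξx, map_smul, gradient, gradient]
  have hη : gradient (fun x => φ x * (φ x * excess v ε x)) x = φ x • (φ x • gradient (excess v ε) x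
      + excess v ε x • gradient φ x) + (φ x * excess v ε x) • gradient φ x := by
    rw [gradient_mul hφx (hφx.fun_mul hgx), gradient_mul hφx hgx]
  have hflux : ⟪A x (gradient v x), gradient (fun x => φ x * (φ x * excess v ε x)) x⟫ =
      ⟪A x (gradient (excess v ε) x), gradient (fun x => φ x * (φ x * excess v ε x)) x⟫ := by
    by_cases h : ε < v x
    · rw [hgrad, if_pos h]
    · rw [hη, hgrad, if_neg h, excess_eq_ite, if_neg h]
      simp
  have hexcess := excess_nonneg v ε x
  have hexcess' := excess_le (hv0 x) hε.le
  have hpot : c x * v x * (φ x * (φ x * excess v ε x)) -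
      c x * excess v ε x * (φ x * (φ x * excess v ε x)) ≤ ε * |c x * v x * φ x ^ 2| := by
    calc _ = ε * (c x * (excess v ε x * φ x ^ 2)) := by
          linear_combination c x * φ x ^ 2 * mul_excess v ε x
      _ ≤ ε * (|c x| * (v x * φ x ^ 2)) := by gcongr; exact le_abs_self _
      _ = ε * |c x * v x * φ x ^ 2| := by
        rw [mul_assoc (c x), abs_mul, abs_of_nonneg (mul_nonneg (hv0 x) (sq_nonneg _))]
  have henergy : excess v ε x ^ 2 * ⟪A x (gradient φ x), gradient φ x⟫ ≤
      v x ^ 2 * ⟪A x (gradient φ x), gradient φ x⟫ :=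
    mul_le_mul_of_nonneg_right (pow_le_pow_left₀ hexcess hexcess' 2) (hApos x hx _)
  have hle := quadratic_add_le (hAsymm x hx) (hApos x hx) (gradient (excess v ε) x) (gradient φ x)
    (gradient ξ x) (c x) (excess v ε x) (φ x) (ξ x) t
  rw [← hη, ← hψ, ← hflux, mul_comm t] at hle
  unfold formDensity
  linarith

include hvΩ hφ hξ

theorem ae_quadratic_add_le (hε : 0 < ε) (t : ℝ) : ∀ᵐ x,
    formDensity A c (fun x => φ x * excess v ε x + ξ x * t)
        (fun x => φ x * excess v ε x + ξ x * t) x ≤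
      formDensity A c v (fun x => φ x * (φ x * excess v ε x)) x + ε * |c x * v x * φ x ^ 2| +
        2 * (v x ^ 2 * ⟪A x (gradient φ x), gradient φ x⟫) +
        2 * t * (φ x * formDensity A c (excess v ε) ξ x) +
        t ^ 2 * (⟪A x (gradient ξ x), gradient ξ x⟫ + formDensity A c ξ ξ x) := by
  filter_upwards [hφ.ae_differentiableAt, hξ.ae_differentiableAt,
    ae_differentiableAt_of_locallyLipschitzOn hΩ (locallyLipschitzOn_excess hv ε)]
    with x hφx hξx hgx
  by_cases hx : x ∈ Ω
  · exact quadratic_add_le_of_differentiableAt hΩ hv hv0 hAsymm hApos hε t hx hφx hξx (hgx hx)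
  · have hψ := ((hφ.isTestOn ε hε).mono hvΩ).add
      (hξ.mul_locallyLipschitz (LocallyLipschitz.const t))
    have hvx : v x = 0 := Function.notMem_support.1 fun h => hx (hvΩ h)
    have hξx : x ∉ tsupport ξ := fun h => hx (hξ.2.2 h)
    rw [formDensity_of_notMem_tsupport fun h => hx (hψ.2.2 h), formDensity_of_notMem_tsupport
      fun h => hx (hvΩ ((hφ.isTestOn_mul_mul hε).2.2 h)), formDensity_of_notMem_tsupport hξx,
      formDensity_of_notMem_tsupport hξx, gradient_of_notMem_tsupport hξx, hvx]
    simp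

include hA hc

theorem stability_excess_add (hstab : ∀ ζ, IsTestOn Ω ζ → 0 ≤ ∫ x, formDensity A c ζ ζ x)
    (hsol : ∀ η, IsTestOn (Function.support v) η → ∫ x, formDensity A c v η x = 0)
    (hε : 0 < ε) (t : ℝ) :
    0 ≤ ε * (∫ x, |c x * v x * φ x ^ 2|) +
      2 * (∫ x, v x ^ 2 * ⟪A x (gradient φ x), gradient φ x⟫) +
      2 * t * (∫ x, φ x * formDensity A c (excess v ε) ξ x) +
      t ^ 2 * ∫ x, (⟪A x (gradient ξ x), gradient ξ x⟫ + formDensity A c ξ ξ x) := by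
  obtain ⟨K, hK⟩ := hφ.lipschitz
  have hη := hφ.isTestOn_mul_mul hε
  have hψ := ((hφ.isTestOn ε hε).mono hvΩ).add
    (hξ.mul_locallyLipschitz (LocallyLipschitz.const t))
  have hξ_lip := hξ.locallyLipschitz.locallyLipschitzOn (s := Ω)
  have hint_ψ := hψ.integrable_formDensity hΩ hA hc hψ.locallyLipschitz.locallyLipschitzOn
  have hint_v := (hη.mono hvΩ).integrable_formDensity hΩ hA hc hv
  have hint_pot := hφ.integrable_potential.abs.const_mul ε
  have hint_energy := hφ.integrable_energy.const_mul 2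
  have hint_cross := (hξ.integrable_mul_formDensity hΩ hA hc (locallyLipschitzOn_excess hv ε)
    hK.continuous).const_mul (2 * t)
  have hint_ξ := ((hξ.integrable_inner_gradient hΩ hA hξ_lip).add
    (hξ.integrable_formDensity hΩ hA hc hξ_lip)).const_mul (t ^ 2)
  have hle := (hstab _ hψ).trans (integral_mono_ae hint_ψ
    ((((hint_v.add hint_pot).add hint_energy).add hint_cross).add hint_ξ)
    (ae_quadratic_add_le hΩ hv hv0 hvΩ hAsymm hApos hφ hξ hε t))
  rw [integral_add' (((hint_v.add hint_pot).add hint_energy).add hint_cross) hint_ξ,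
    integral_add' ((hint_v.add hint_pot).add hint_energy) hint_cross,
    integral_add' (hint_v.add hint_pot) hint_energy, integral_add' hint_v hint_pot, hsol _ hη,
    zero_add, integral_const_mul, integral_const_mul, integral_const_mul, integral_const_mul] at hle
  exact hle

theorem stability_add (hstab : ∀ ζ, IsTestOn Ω ζ → 0 ≤ ∫ x, formDensity A c ζ ζ x)
    (hsol : ∀ η, IsTestOn (Function.support v) η → ∫ x, formDensity A c v η x = 0) (t : ℝ) :
    0 ≤ 2 * (∫ x, v x ^ 2 * ⟪A x (gradient φ x), gradient φ x⟫) +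
      2 * t * (∫ x, φ x * formDensity A c v ξ x) +
      t ^ 2 * ∫ x, (⟪A x (gradient ξ x), gradient ξ x⟫ + formDensity A c ξ ξ x) := by
  obtain ⟨K, hK⟩ := hφ.lipschitz
  have hpot : Tendsto (fun ε => ε * ∫ x, |c x * v x * φ x ^ 2|) (𝓝[>] 0) (𝓝 0) := by
    have hid : Tendsto (fun ε : ℝ => ε) (𝓝[>] 0) (𝓝 0) :=
      tendsto_nhdsWithin_of_tendsto_nhds tendsto_id
    simpa only [zero_mul] using hid.mul_const (∫ x, |c x * v x * φ x ^ 2|)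
  have hcross := (tendsto_integral_mul_formDensity_excess hΩ hv hv0 hA hc hξ
    hK.continuous).const_mul (2 * t)
  have hlim := ((hpot.add_const (2 * ∫ x, v x ^ 2 * ⟪A x (gradient φ x), gradient φ x⟫)).add
    hcross).add_const (t ^ 2 * ∫ x, (⟪A x (gradient ξ x), gradient ξ x⟫ + formDensity A c ξ ξ x))
  rw [zero_add] at hlim
  refine ge_of_tendsto hlim ?_
  filter_upwards [self_mem_nhdsWithin] with ε hε
  exact stability_excess_add hΩ hv hv0 hvΩ hA hc hAsymm hApos hφ hξ hstab hsol hε t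

end

/-- A localizing sequence for `v`, exhausting `{v ≠ 0}` with vanishing energy. -/
structure IsLocalizingSeq (A : 𝔼 n → 𝔼 n →L[ℝ] 𝔼 n) (c v : 𝔼 n → ℝ) (Ω : Set (𝔼 n))
    (φ : ℕ → 𝔼 n → ℝ) : Prop where
  isLocalizer : ∀ j, IsLocalizer A c v (φ j)
  tendstoUniformlyOn : ∀ K, IsCompact K → K ⊆ Ω →
    TendstoUniformlyOn φ (fun _ => 1) atTop (K ∩ Function.support v)
  tendsto_energy : Tendsto
    (fun j => ∫ x, v x ^ 2 * ⟪A x (gradient (φ j) x), gradient (φ j) x⟫) atTop (𝓝 0)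

section

variable {φ : ℕ → 𝔼 n → ℝ} (hΩ : IsOpen Ω) (hv : LocallyLipschitzOn Ω v) (hv0 : ∀ x, 0 ≤ v x)
  (hA : ContinuousOn A Ω) (hc : ContinuousOn c Ω) (hφ : IsLocalizingSeq A c v Ω φ)

include hΩ hv hv0 hA hc hφ

theorem IsLocalizingSeq.tendsto_integral_mul_formDensity (hξ : IsTestOn Ω ξ) :
    Tendsto (fun j => ∫ x, φ j x * formDensity A c v ξ x) atTop
      (𝓝 (∫ x, formDensity A c v ξ x)) := by
  have hF := hξ.integrable_formDensity hΩ hA hc hv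
  have hunif := hφ.tendstoUniformlyOn _ hξ.2.1 hξ.2.2
  have hzero : ∀ x ∉ tsupport ξ ∩ Function.support v, formDensity A c v ξ x = 0 := fun x hx => by
    by_cases hxξ : x ∈ tsupport ξ
    · have hvx : v x = 0 := Function.notMem_support.1 fun h => hx ⟨hxξ, h⟩
      rw [formDensity, gradient_eq_zero_of_isLocalMin (Eventually.of_forall fun y => hvx ▸ hv0 y),
        hvx]
      simp
    · exact formDensity_of_notMem_tsupport hxξ
  refine tendsto_integral_filter_of_dominated_convergence
    (fun x => 2 * |formDensity A c v ξ x|) (Eventually.of_forall fun j => ?_) ?_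
    (hF.abs.const_mul 2) (Eventually.of_forall fun x => ?_)
  · obtain ⟨K, hK⟩ := (hφ.isLocalizer j).lipschitz
    exact (hξ.integrable_mul_formDensity hΩ hA hc hv hK.continuous).aestronglyMeasurable
  · filter_upwards [tendstoUniformlyOn_iff.1 hunif 1 one_pos] with j hj
    refine Eventually.of_forall fun x => ?_
    by_cases hx : x ∈ tsupport ξ ∩ Function.support v
    · have hj' := hj x hx
      rw [Real.dist_eq, abs_sub_comm] at hj'
      rw [Real.norm_eq_abs, abs_mul]
      gcongr
      linarith [abs_sub_abs_le_abs_sub (φ j x) 1, abs_one (α := ℝ)]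
    · simp [hzero x hx]
  · by_cases hx : x ∈ tsupport ξ ∩ Function.support v
    · simpa using (hunif.tendsto_at hx).mul_const (formDensity A c v ξ x)
    · simp [hzero x hx]

/- Testing stability with `φ j * v + t * ξ` gives `0 ≤ 2 t I + t² C` in the limit `j → ∞`, where `I`
is the weak form at `ξ`; let `t ↓ 0`. -/
theorem isSupersolutionOn_of_stable (hvΩ : Function.support v ⊆ Ω)
    (hAsymm : ∀ x ∈ Ω, ∀ p q, ⟪A x p, q⟫ = ⟪A x q, p⟫) (hApos : ∀ x ∈ Ω, ∀ p, 0 ≤ ⟪A x p, p⟫)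
    (hstab : ∀ ζ, IsTestOn Ω ζ → 0 ≤ ∫ x, formDensity A c ζ ζ x)
    (hsol : ∀ η, IsTestOn (Function.support v) η → ∫ x, formDensity A c v η x = 0) :
    IsSupersolutionOn A c v Ω := by
  intro ξ hξ _
  set I := ∫ x, formDensity A c v ξ x with hI
  set C := ∫ x, (⟪A x (gradient ξ x), gradient ξ x⟫ + formDensity A c ξ ξ x)
  have hquad : ∀ t, 0 ≤ 2 * t * I + t ^ 2 * C := fun t => by
    have hlim := ((hφ.tendsto_energy.const_mul 2).add ((hφ.tendsto_integral_mul_formDensity hΩ hv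
      hv0 hA hc hξ).const_mul (2 * t))).add_const (t ^ 2 * C)
    rw [mul_zero, zero_add] at hlim
    exact ge_of_tendsto' hlim fun j =>
      stability_add hΩ hv hv0 hvΩ hA hc hAsymm hApos (hφ.isLocalizer j) hξ hstab hsol t
  have hlin : ∀ᶠ t in 𝓝[>] (0 : ℝ), 0 ≤ 2 * I + t * C := by
    filter_upwards [self_mem_nhdsWithin] with t ht
    exact nonneg_of_mul_nonneg_right (by linarith [hquad t]) (mem_Ioi.1 ht)
  have hlim : Tendsto (fun t : ℝ => 2 * I + t * C) (𝓝[>] 0) (𝓝 (2 * I + 0 * C)) :=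
    (tendsto_nhdsWithin_of_tendsto_nhds (tendsto_id.mul_const C)).const_add _
  have hI0 : 0 ≤ I := by linarith [ge_of_tendsto hlim hlin]
  rw [hI, hξ.integral_formDensity hΩ hA hc hv] at hI0
  linarith

end

end Stability

/-! ### Negative parts -/

section NegativePart

/-- The negative part of `w`, extended by zero from `S`. -/
def negPartOn {X : Type*} (S : Set X) (w : X → ℝ) : X → ℝ := S.indicator fun x => max (-w x) 0

theorem negPartOn_nonneg {X : Type*} (S : Set X) (w : X → ℝ) (x : X) : 0 ≤ negPartOn S w x :=
  indicator_nonneg (fun _ _ => le_max_right _ _) x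

theorem negPartOn_pos_iff {X : Type*} {S : Set X} {w : X → ℝ} {x : X} :
    0 < negPartOn S w x ↔ x ∈ S ∧ w x < 0 := by
  by_cases hx : x ∈ S <;> simp [negPartOn, hx]

theorem support_negPartOn {X : Type*} (S : Set X) (w : X → ℝ) :
    Function.support (negPartOn S w) = {x ∈ S | w x < 0} :=
  ext fun x => ((negPartOn_nonneg S w x).lt_iff_ne'.symm.trans negPartOn_pos_iff :)

theorem locallyLipschitzOn_negPartOn {E : Type*} [NormedAddCommGroup E] [NormedSpace ℝ E]
    {S Ω : Set E} {w : E → ℝ} (hΩ : IsOpen Ω) (hw : LocallyLipschitzOn Ω w)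
    (hfr : ∀ x ∈ Ω ∩ frontier S, 0 ≤ w x) : LocallyLipschitzOn Ω (negPartOn S w) := by
  intro x hx
  have hneg : LocallyLipschitzOn Ω fun x => max (-w x) 0 :=
    locallyLipschitzOn_max (locallyLipschitzOn_comp (g := fun s => -s)
      (fun _ _ => contDiff_neg.contDiffAt) hw) (LocallyLipschitz.const 0).locallyLipschitzOn
  obtain ⟨K, t, ht, hK⟩ := hneg hx
  rw [hΩ.nhdsWithin_eq hx] at ht
  obtain ⟨r, hr, hball⟩ := Metric.mem_nhds_iff.1 (inter_mem ht (hΩ.mem_nhds hx))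
  refine ⟨K, ball x r, mem_nhdsWithin_of_mem_nhds (ball_mem_nhds x hr), ?_⟩
  exact lipschitzOnWith_indicator (convex_ball x r)
    (hK.mono fun y hy => (hball hy.1).1) fun y hy =>
      max_eq_right (neg_nonpos.2 (hfr y ⟨(hball hy.1).2, hy.2⟩))

theorem gradient_negPartOn {E : Type*} [NormedAddCommGroup E] [InnerProductSpace ℝ E]
    [CompleteSpace E] {S : Set E} {w : E → ℝ} {x : E} (hS : S ∈ 𝓝 x) (hw : ContinuousAt w x)
    (hwx : w x < 0) : gradient (negPartOn S w) x = -gradient w x := by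
  have hev : negPartOn S w =ᶠ[𝓝 x] fun y => -w y := by
    filter_upwards [hS, hw.eventually_lt_const hwx] with y hyS hy
    rw [negPartOn, indicator_of_mem hyS, max_eq_left (neg_pos.2 hy).le]
  rw [gradient, hev.fderiv_eq, fderiv_fun_neg, map_neg, gradient]

variable {A : 𝔼 n → 𝔼 n →L[ℝ] 𝔼 n} {c w φ : 𝔼 n → ℝ} {S Ω : Set (𝔼 n)}

theorem formDensity_negPartOn {η : 𝔼 n → ℝ} (hS : IsOpen S) (hw : ContinuousOn w S)
    (hη : IsTestOn (Function.support (negPartOn S w)) η) (x : 𝔼 n) :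
    formDensity A c (negPartOn S w) η x = -formDensity A c w η x := by
  by_cases hx : x ∈ tsupport η
  · have hxS : x ∈ S ∧ w x < 0 := (support_negPartOn S w).subset (hη.2.2 hx)
    rw [formDensity, gradient_negPartOn (hS.mem_nhds hxS.1)
      (hw.continuousAt (hS.mem_nhds hxS.1)) hxS.2, negPartOn, indicator_of_mem hxS.1,
      max_eq_left (neg_pos.2 hxS.2).le, formDensity, map_neg, inner_neg_left]
    ring
  · rw [formDensity_of_notMem_tsupport hx, formDensity_of_notMem_tsupport hx, neg_zero]

theorem integrable_indicator_mul {g φ : 𝔼 n → ℝ} (hS : MeasurableSet S)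
    (hg : ContinuousOn g (closure S)) (hφ : Continuous φ) (hφc : HasCompactSupport φ) :
    Integrable (S.indicator fun x => g x * φ x) := by
  have hK : IsCompact (closure S ∩ tsupport φ) := hφc.inter_left isClosed_closure
  have hint : IntegrableOn (g * φ) (closure S ∩ tsupport φ) :=
    ((hg.mono inter_subset_left).mul hφ.continuousOn).integrableOn_compact hK
  refine (integrable_indicator_iff hS).2 (hint.of_forall_sdiff_eq_zero hS fun x hx => ?_)
  rw [Pi.mul_apply, image_eq_zero_of_notMem_tsupport fun h => hx.2 ⟨subset_closure hx.1, h⟩,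
    mul_zero]

theorem integrable_indicator_inner_gradient (hS : MeasurableSet S)
    (hA : ContinuousOn A (closure S)) (hφ : IsTestOn univ φ) :
    Integrable (S.indicator fun x => ⟪A x (gradient φ x), gradient φ x⟫) := by
  have hK : IsCompact (closure S ∩ tsupport φ) := hφ.2.1.inter_left isClosed_closure
  have hgrad := hφ.memLp_top_gradient (closure S ∩ tsupport φ)
  have hint := integrable_inner_clm_apply hK (hA.mono inter_subset_left) hgrad
    (hgrad.indicator hS) fun x hx => by
      by_cases hxS : x ∈ S
      · rw [indicator_of_mem hxS,
          gradient_of_notMem_tsupport fun h => hx ⟨subset_closure hxS, h⟩]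
      · exact indicator_of_notMem hxS _
  refine hint.congr (Eventually.of_forall fun x => ?_)
  by_cases hxS : x ∈ S <;> simp [hxS]

/- The set `{x ∈ closure S | w x ≤ -ε}` is closed and contained in `S`. -/
theorem isTestOn_mul_excess_negPartOn {ε : ℝ} (hΩ : IsOpen Ω) (hSΩ : S ⊆ Ω)
    (hw : ContinuousOn w (closure S)) (hneg : ∀ x ∈ closure S, w x < 0 → x ∈ S)
    (hv : LocallyLipschitzOn Ω (negPartOn S w)) (hφ : IsTestOn univ φ) (hε : 0 < ε) :
    IsTestOn (Function.support (negPartOn S w)) fun x => φ x * excess (negPartOn S w) ε x := by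
  set K := tsupport φ ∩ (closure S ∩ w ⁻¹' Iic (-ε))
  have hK : IsCompact K :=
    hφ.2.1.inter_right (hw.preimage_isClosed_of_isClosed isClosed_closure isClosed_Iic)
  have hKS : K ⊆ Function.support (negPartOn S w) := fun x hx => by
    have hwx : w x < 0 := (mem_Iic.1 hx.2.2).trans_lt (neg_neg_of_pos hε)
    exact (negPartOn_pos_iff.2 ⟨hneg x hx.2.1 hwx, hwx⟩).ne'
  have hsupp : tsupport (fun x => φ x * excess (negPartOn S w) ε x) ⊆ K := by
    refine closure_minimal (fun x hx => ⟨subset_closure (left_ne_zero_of_mul hx), ?_⟩) hK.isClosed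
    have hεx : ε < negPartOn S w x := by
      by_contra! h
      exact right_ne_zero_of_mul hx (max_eq_right (sub_nonpos.2 h))
    obtain ⟨hxS, hwx⟩ := negPartOn_pos_iff.1 (hε.trans hεx)
    rw [negPartOn, indicator_of_mem hxS, max_eq_left (neg_pos.2 hwx).le] at hεx
    exact ⟨subset_closure hxS, (lt_neg_of_lt_neg hεx).le⟩
  have hSΩ' : Function.support (negPartOn S w) ⊆ Ω :=
    (support_negPartOn S w).subset.trans fun x hx => hSΩ hx.1
  have hc : HasCompactSupport fun x => φ x * excess (negPartOn S w) ε x := hφ.2.1.mul_right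
  exact ⟨(isTestOn_of_locallyLipschitzOn hΩ (locallyLipschitzOn_mul
    hφ.locallyLipschitz.locallyLipschitzOn (locallyLipschitzOn_excess hv ε)) hc
    (hsupp.trans (hKS.trans hSΩ'))).1, hc, hsupp.trans hKS⟩

theorem isLocalizer_negPartOn (hΩ : IsOpen Ω) (hS : IsOpen S) (hSΩ : S ⊆ Ω)
    (hA : ContinuousOn A (closure S)) (hc : ContinuousOn c (closure S))
    (hw : ContinuousOn w (closure S)) (hneg : ∀ x ∈ closure S, w x < 0 → x ∈ S)
    (hv : LocallyLipschitzOn Ω (negPartOn S w)) (hφ : IsTestOn univ φ) :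
    IsLocalizer A c (negPartOn S w) φ where
  lipschitz := hφ.1
  isTestOn _ hε := isTestOn_mul_excess_negPartOn hΩ hSΩ hw hneg hv hφ hε
  integrable_potential := by
    have hφ' := hφ.locallyLipschitz.continuous
    have hw' : ContinuousOn (fun x => max (-w x) 0) (closure S) := hw.neg.sup continuousOn_const
    refine (integrable_indicator_mul hS.measurableSet ((hc.mul hw').mul hφ'.continuousOn) hφ'
      hφ.2.1).congr (Eventually.of_forall fun x => ?_)
    by_cases hx : x ∈ S <;> simp [negPartOn, hx]; ring
  integrable_energy := by
    have hw' : ContinuousOn (fun x => max (-w x) 0) (closure S) := hw.neg.sup continuousOn_const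
    refine (integrable_indicator_inner_gradient hS.measurableSet ((hw'.pow 2).smul hA) hφ).congr
      (Eventually.of_forall fun x => ?_)
    by_cases hx : x ∈ S <;> simp [negPartOn, hx]

theorem isLocalizingSeq_negPartOn {φ : ℕ → 𝔼 n → ℝ} {g : 𝔼 n → ℝ} (hΩ : IsOpen Ω)
    (hS : IsOpen S) (hSΩ : S ⊆ Ω) (hA : ContinuousOn A (closure S))
    (hApos : ∀ x ∈ S, ∀ p, 0 ≤ ⟪A x p, p⟫) (hc : ContinuousOn c (closure S))
    (hw : ContinuousOn w (closure S)) (hneg : ∀ x ∈ closure S, w x < 0 → x ∈ S)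
    (hv : LocallyLipschitzOn Ω (negPartOn S w)) (hg : ContinuousOn g (closure S))
    (hwg : ∀ x ∈ S, w x ^ 2 ≤ g x) (hφ : ∀ j, IsTestOn univ (φ j))
    (hunif : ∀ K, IsCompact K → K ⊆ closure S → TendstoUniformlyOn φ (fun _ => 1) atTop K)
    (hlim : Tendsto (fun j => ∫ x in S, g x * ⟪A x (gradient (φ j) x), gradient (φ j) x⟫)
      atTop (𝓝 0)) :
    IsLocalizingSeq A c (negPartOn S w) Ω φ := by
  have hloc := fun j => isLocalizer_negPartOn hΩ hS hSΩ hA hc hw hneg hv (hφ j)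
  refine ⟨hloc, fun K hK _ => ?_, ?_⟩
  · refine (hunif (K ∩ closure S) (hK.inter_right isClosed_closure) inter_subset_right).mono
      (inter_subset_inter_right K fun x hx => subset_closure ?_)
    exact ((support_negPartOn S w).subset hx).1
  · refine squeeze_zero (fun j => integral_nonneg fun x => ?_) (fun j => ?_) hlim
    · by_cases hx : x ∈ S
      · exact mul_nonneg (sq_nonneg _) (hApos x hx _)
      · simp [negPartOn, hx]
    · have hint := integrable_indicator_inner_gradient hS.measurableSet (hg.smul hA) (hφ j)
      simp only [Pi.smul_apply', smul_apply, real_inner_smul_left] at hint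
      rw [← integral_indicator hS.measurableSet]
      refine integral_mono (hloc j).integrable_energy hint fun x => ?_
      by_cases hx : x ∈ S
      · simp only [negPartOn, hx, indicator_of_mem]
        refine mul_le_mul_of_nonneg_right (le_trans ?_ (hwg x hx)) (hApos x hx _)
        rw [← sq_abs (w x)]
        exact pow_le_pow_left₀ (le_max_right _ _) (max_le (neg_le_abs _) (abs_nonneg _)) 2
      · simp [negPartOn, hx]

theorem inner_apply_self_nonneg {E : Type*} [NormedAddCommGroup E] [InnerProductSpace ℝ E]
    {B : E →L[ℝ] E} (hB : ∀ p ≠ 0, 0 < ⟪B p, p⟫) (p : E) : 0 ≤ ⟪B p, p⟫ := by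
  rcases eq_or_ne p 0 with rfl | hp
  · rw [inner_zero_right]
  · exact (hB p hp).le

theorem pos_of_stable {φ : ℕ → 𝔼 n → ℝ} {x₁ : 𝔼 n} (hn : n ≠ 0) (hΩ : IsOpen Ω)
    (hΩc : IsPreconnected Ω) (hS : IsOpen S) (hSc : IsPreconnected S) (hSΩ : S ⊆ Ω)
    (hA : ContinuousOn A Ω) (hAsymm : ∀ x ∈ Ω, ∀ p q, ⟪A x p, q⟫ = ⟪A x q, p⟫)
    (hApos : ∀ x ∈ Ω, ∀ p ≠ 0, 0 < ⟪A x p, p⟫) (hc : ContinuousOn c Ω)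
    (hw : LocallyLipschitzOn Ω w)
    (hsol : ∀ η, IsTestOn Ω η → ∫ x, formDensity A c w η x = 0)
    (hstab : ∀ ζ, IsTestOn Ω ζ → 0 ≤ ∫ x, formDensity A c ζ ζ x)
    (hfr : ∀ x ∈ Ω ∩ frontier S, 0 ≤ w x) (hφ : IsLocalizingSeq A c (negPartOn S w) Ω φ)
    (hx₁ : x₁ ∈ S) (hwx₁ : 0 < w x₁) : ∀ x ∈ S, 0 < w x := by
  have hv := locallyLipschitzOn_negPartOn hΩ hw hfr
  have hvΩ : Function.support (negPartOn S w) ⊆ Ω := fun x hx =>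
    hSΩ ((support_negPartOn S w).subset hx).1
  have hvsuper : IsSupersolutionOn A c (negPartOn S w) Ω :=
    isSupersolutionOn_of_stable hΩ hv (negPartOn_nonneg S w) hA hc hφ hvΩ hAsymm
      (fun x hx => inner_apply_self_nonneg (hApos x hx)) hstab fun η hη => by
        simp_rw [formDensity_negPartOn hS (hw.continuousOn.mono hSΩ) hη]
        rw [integral_neg, hsol η (hη.mono hvΩ), neg_zero]
  have hw0 : ∀ x ∈ S, 0 ≤ w x := fun x hx => by
    by_contra! hwx
    have hvx₁ := pos_of_isSupersolutionOn hn hΩ hΩc hA hc hApos hv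
      (fun x _ => negPartOn_nonneg S w x) hvsuper (hSΩ hx) (negPartOn_pos_iff.2 ⟨hx, hwx⟩) x₁
      (hSΩ hx₁)
    exact hwx₁.not_gt (negPartOn_pos_iff.1 hvx₁).2
  have hwsuper : IsSupersolutionOn A c w Ω := fun ξ hξ _ => by
    have h := hsol ξ hξ
    rw [hξ.integral_formDensity hΩ hA hc hw] at h
    exact (sub_eq_zero.1 h).ge
  exact pos_of_isSupersolutionOn hn hS hSc (hA.mono hSΩ) (hc.mono hSΩ)
    (fun x hx => hApos x (hSΩ hx)) (hw.mono hSΩ) hw0 (hwsuper.mono hSΩ) hx₁ hwx₁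

end NegativePart

/-! ### Application to directional derivatives -/

section Application

variable {a f : ℝ → ℝ} {u : 𝔼 n → ℝ} {Ω : Set (𝔼 n)} {Du : 𝔼 n → 𝔼 n} (hΩ : IsOpen Ω)
  (ha : ContDiffOn ℝ 1 a (Ici 0)) (hf : ContDiff ℝ 1 f) (hu : ContDiffOn ℝ 2 u Ω)
  (hDu : ∀ x ∈ Ω, Du x = gradient u x)

theorem continuousOn_fluxDeriv_comp {S : Set (𝔼 n)} (ha : ContDiffOn ℝ 1 a (Ici 0))
    (hDuc : ContinuousOn Du S) : ContinuousOn (fun x => fluxDeriv a (Du x)) S :=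
  (continuous_fluxDeriv ha).comp_continuousOn hDuc

theorem continuousOn_deriv_comp {X : Type*} [TopologicalSpace X] {v : X → ℝ} {S : Set X}
    (hf : ContDiff ℝ 1 f) (hv : ContinuousOn v S) : ContinuousOn (fun x => deriv f (v x)) S :=
  (hf.continuous_deriv le_rfl).comp_continuousOn hv

include hΩ hDu in
theorem eventuallyEq_dirDeriv {x : 𝔼 n} (hx : x ∈ Ω) (e : 𝔼 n) :
    (fun x => ⟪Du x, e⟫) =ᶠ[𝓝 x] dirDeriv u e := by
  filter_upwards [hΩ.mem_nhds hx] with y hy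
  rw [dirDeriv, hDu y hy]

include hΩ hu hDu in
theorem locallyLipschitzOn_inner_extension (e : 𝔼 n) :
    LocallyLipschitzOn Ω fun x => ⟪Du x, e⟫ := by
  have hw : ContDiffOn ℝ 1 (fun x => ⟪Du x, e⟫) Ω :=
    (contDiffOn_dirDeriv hΩ hu e).congr fun x hx => by rw [dirDeriv, hDu x hx]
  exact locallyLipschitzOn_comp (g := fun x => ⟪Du x, e⟫)
    (fun x hx => hw.contDiffAt (hΩ.mem_nhds hx)) LocallyLipschitz.id.locallyLipschitzOn

include hΩ ha hf hu hDu

theorem IsStable.integral_formDensity_nonneg (hstab : IsStable a f Ω u) {ζ : 𝔼 n → ℝ}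
    (hζ : IsTestOn Ω ζ) :
    0 ≤ ∫ x, formDensity (fun x => fluxDeriv a (Du x)) (fun x => deriv f (u x)) ζ ζ x := by
  have hDuc : ContinuousOn Du Ω :=
    (contDiffOn_gradient (m := 1) hΩ hu le_rfl).continuousOn.congr hDu
  rw [hζ.integral_formDensity hΩ (continuousOn_fluxDeriv_comp ha hDuc)
    (continuousOn_deriv_comp hf hu.continuousOn) hζ.locallyLipschitz.locallyLipschitzOn,
    sub_nonneg, ← setIntegral_mul_eq_integral hζ.2.2,
    ← setIntegral_inner_gradient_eq_integral hζ.2.2]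
  have h := hstab ζ hζ
  simp_rw [← fluxDeriv_apply, pow_two, ← mul_assoc] at h
  refine h.trans_eq (setIntegral_congr_fun hΩ.measurableSet fun x hx => ?_)
  simp only [hDu x hx]

theorem IsWeakSolution.integral_formDensity_dirDeriv (hsol : IsWeakSolution a f Ω u) (e : 𝔼 n)
    {η : 𝔼 n → ℝ} (hη : IsTestOn Ω η) :
    ∫ x, formDensity (fun x => fluxDeriv a (Du x)) (fun x => deriv f (u x))
      (fun x => ⟪Du x, e⟫) η x = 0 := by
  have hDuc : ContinuousOn Du Ω :=
    (contDiffOn_gradient (m := 1) hΩ hu le_rfl).continuousOn.congr hDu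
  have h := hsol.integral_dirDeriv hΩ ha hf hu e hη
  rw [← setIntegral_mul_eq_integral hη.2.2, ← setIntegral_inner_gradient_eq_integral hη.2.2] at h
  rw [hη.integral_formDensity hΩ (continuousOn_fluxDeriv_comp ha hDuc)
    (continuousOn_deriv_comp hf hu.continuousOn) (locallyLipschitzOn_inner_extension hΩ hu hDu e),
    sub_eq_zero, ← setIntegral_mul_eq_integral hη.2.2,
    ← setIntegral_inner_gradient_eq_integral hη.2.2]
  refine (setIntegral_congr_fun hΩ.measurableSet fun x hx => ?_).trans
    (h.trans (setIntegral_congr_fun hΩ.measurableSet fun x hx => ?_))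
  · have hgrad : gradient (fun x => ⟪Du x, e⟫) x = gradient (dirDeriv u e) x := by
      rw [gradient, gradient, (eventuallyEq_dirDeriv hΩ hDu hx e).fderiv_eq]
    simp only [hDu x hx, hgrad]
  · simp only [dirDeriv, hDu x hx]

end Application

theorem exists_mem_lt_of_mem_closure {X : Type*} [TopologicalSpace X] {S : Set X} {w : X → ℝ}
    (hw : ContinuousOn w (closure S)) {p : X} {t : ℝ} (hp : p ∈ closure S) (hwp : t < w p) :
    ∃ x ∈ S, t < w x :=
  haveI := mem_closure_iff_nhdsWithin_neBot.1 hp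
  (((hw p hp).mono subset_closure).eventually_const_lt hwp).and self_mem_nhdsWithin |>.exists.imp
    fun _ => And.symm

section General

variable {a f : ℝ → ℝ} {u : 𝔼 n → ℝ} {Ω Ω₀ : Set (𝔼 n)} {Du : 𝔼 n → 𝔼 n} {e : 𝔼 n}

theorem inner_nonneg_of_mem_frontier
    (hDu : ∀ x ∈ Ω, Du x = gradient u x)
    (hfr : frontier Ω₀ ⊆ frontier Ω ∪ {x ∈ Ω | gradient u x = 0})
    (he : ∀ p ∈ closure Ω₀ ∩ frontier Ω, 0 ≤ ⟪Du p, e⟫) :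
    ∀ x ∈ frontier Ω₀, 0 ≤ ⟪Du x, e⟫ := fun x hx => by
  rcases hfr hx with hx' | ⟨hxΩ, hcrit⟩
  · exact he x ⟨frontier_subset_closure hx, hx'⟩
  · rw [hDu x hxΩ, hcrit, inner_zero_left]

theorem ModerateEnergyGrowth.exists_isLocalizingSeq (hmeg : ModerateEnergyGrowth a u Ω₀)
    (hΩ : IsOpen Ω) (hΩ₀ : IsOpen Ω₀) (hsub : Ω₀ ⊆ Ω) (ha : ContDiffOn ℝ 1 a (Ici 0))
    (hapos : ∀ t ≥ 0, 0 < a t) (hlam : ∀ t ≥ 0, 0 < lam1 a t) (hf : ContDiff ℝ 1 f)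
    (hu : ContDiffOn ℝ 2 u Ω) (hucl : ContinuousOn u (closure Ω))
    (hDu : ∀ x ∈ Ω, Du x = gradient u x) (hDuc : ContinuousOn Du (closure Ω))
    (hfr : ∀ x ∈ frontier Ω₀, 0 ≤ ⟪Du x, e⟫) :
    ∃ φ, IsLocalizingSeq (fun x => fluxDeriv a (Du x)) (fun x => deriv f (u x))
      (negPartOn Ω₀ fun x => ⟪Du x, e⟫) Ω φ := by
  obtain ⟨φ, hφlip, hφc, -, hunif, hlim⟩ := hmeg
  have hDuc' := hDuc.mono (closure_mono hsub)
  have hApos : ∀ x p, 0 ≤ ⟪fluxDeriv a (Du x) p, p⟫ := fun x => inner_apply_self_nonneg fun p =>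
    inner_fluxDeriv_self_pos (hapos _ (norm_nonneg _)) (hlam _ (norm_nonneg _))
  have hneg : ∀ x ∈ closure Ω₀, ⟪Du x, e⟫ < 0 → x ∈ Ω₀ := fun x hx hneg => by
    by_contra hxΩ₀
    exact hneg.not_ge (hfr x (hΩ₀.frontier_eq ▸ ⟨hx, hxΩ₀⟩))
  have hlim' := hlim.const_mul (‖e‖ ^ 2)
  simp_rw [mul_zero, ← integral_const_mul] at hlim'
  refine ⟨φ, isLocalizingSeq_negPartOn (g := fun x => ‖e‖ ^ 2 * ‖Du x‖ ^ 2) hΩ hΩ₀ hsub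
    (continuousOn_fluxDeriv_comp ha hDuc') (fun x _ => hApos x)
    (continuousOn_deriv_comp hf (hucl.mono (closure_mono hsub)))
    (hDuc'.inner continuousOn_const) hneg
    (locallyLipschitzOn_negPartOn hΩ (locallyLipschitzOn_inner_extension hΩ hu hDu e)
      fun x hx => hfr x hx.2)
    (continuousOn_const.mul (hDuc'.norm.pow 2)) (fun x _ => ?_)
    (fun j => ⟨hφlip j, hφc j, subset_univ _⟩) hunif ?_⟩
  · rw [← mul_pow, mul_comm, ← sq_abs]
    exact pow_le_pow_left₀ (abs_nonneg _) (abs_real_inner_le_norm _ _) 2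
  · refine hlim'.congr fun j => setIntegral_congr_fun hΩ₀.measurableSet fun x hx => ?_
    simp only [hDu x (hsub hx), fluxDeriv_apply, mul_assoc]

end General

theorem monotonicity_from_moderate_energy_growth_general {Ω Ω₀ : Set (𝔼 n)} (hΩ : IsOpen Ω)
    (hΩc : IsPreconnected Ω) {a f : ℝ → ℝ} (ha : ContDiffOn ℝ 1 a (Ici 0))
    (hapos : ∀ t ≥ 0, 0 < a t) (hlam : ∀ t ≥ 0, 0 < lam1 a t) (hf : ContDiff ℝ 1 f)
    {u : 𝔼 n → ℝ} (hu : ContDiffOn ℝ 2 u Ω) (hucl : ContinuousOn u (closure Ω))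
    {Du : 𝔼 n → 𝔼 n} (hDu : ∀ x ∈ Ω, Du x = gradient u x) (hDuc : ContinuousOn Du (closure Ω))
    (hsol : IsWeakSolution a f Ω u) (hstab : IsStable a f Ω u) (hΩ₀ : IsOpen Ω₀)
    (hΩ₀c : IsPreconnected Ω₀) (hsub : Ω₀ ⊆ Ω)
    (hfr : frontier Ω₀ ⊆ frontier Ω ∪ {x ∈ Ω | gradient u x = 0}) {e : 𝔼 n}
    (he : ∀ p ∈ closure Ω₀ ∩ frontier Ω, 0 ≤ ⟪Du p, e⟫)
    (he' : ∃ p ∈ closure Ω₀ ∩ frontier Ω, ⟪Du p, e⟫ ≠ 0)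
    (hmeg : ModerateEnergyGrowth a u Ω₀) : ∀ x ∈ Ω₀, 0 < ⟪gradient u x, e⟫ := by
  obtain ⟨p, hp, hpe⟩ := he'
  have hn : n ≠ 0 := fun h => by
    subst h
    exact hpe (by rw [Subsingleton.elim e 0, inner_zero_right])
  have hw : ContinuousOn (fun x => ⟪Du x, e⟫) (closure Ω₀) :=
    (hDuc.mono (closure_mono hsub)).inner continuousOn_const
  obtain ⟨x₁, hx₁, hwx₁⟩ := exists_mem_lt_of_mem_closure hw hp.1 ((he p hp).lt_of_ne' hpe)
  have hfr' := inner_nonneg_of_mem_frontier hDu hfr he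
  obtain ⟨φ, hφ⟩ := hmeg.exists_isLocalizingSeq hΩ hΩ₀ hsub ha hapos hlam hf hu hucl hDu hDuc hfr'
  have hpos := pos_of_stable hn hΩ hΩc hΩ₀ hΩ₀c hsub
    (continuousOn_fluxDeriv_comp ha (hDuc.mono subset_closure))
    (fun x _ => inner_fluxDeriv_comm a (Du x))
    (fun x _ p hp => inner_fluxDeriv_self_pos (hapos _ (norm_nonneg _)) (hlam _ (norm_nonneg _)) hp)
    (continuousOn_deriv_comp hf hu.continuousOn) (locallyLipschitzOn_inner_extension hΩ hu hDu e)
    (fun _ => hsol.integral_formDensity_dirDeriv hΩ ha hf hu hDu e)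
    (fun _ => hstab.integral_formDensity_nonneg hΩ ha hf hu hDu) (fun x hx => hfr' x hx.2) hφ
    hx₁ hwx₁
  exact fun x hx => hDu x (hsub hx) ▸ hpos x hx

/-- Theorem 3.5 of the paper, in `ℝⁿ` with the Killing field a constant field `e`:
monotonicity from moderate energy growth. -/
theorem monotonicity_from_moderate_energy_growth
    (n : ℕ) (Ω : Set (EuclideanSpace ℝ (Fin n)))
    (hΩ : IsCkDomain 1 Ω)
    (a : ℝ → ℝ) (ha : ContDiffOn ℝ 1 a (Ici 0))
    (hapos : ∀ t ≥ (0 : ℝ), 0 < a t) (hlam : ∀ t ≥ (0 : ℝ), 0 < lam1 a t)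
    (f : ℝ → ℝ) (hf : ContDiff ℝ 1 f)
    (u : EuclideanSpace ℝ (Fin n) → ℝ)
    (hu2 : ContDiffOn ℝ 2 u Ω) (hucl : ContinuousOn u (closure Ω))
    (Du : EuclideanSpace ℝ (Fin n) → EuclideanSpace ℝ (Fin n))
    (hDu : ∀ x ∈ Ω, Du x = gradient u x) (hDuc : ContinuousOn Du (closure Ω))
    (hnc : ¬ ∃ c : ℝ, ∀ x ∈ Ω, u x = c)
    (hsol : IsWeakSolution a f Ω u) (hstab : IsStable a f Ω u)
    (Ω₀ : Set (EuclideanSpace ℝ (Fin n)))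
    (hΩ₀o : IsOpen Ω₀) (hΩ₀c : IsConnected Ω₀) (hΩ₀sub : Ω₀ ⊆ Ω)
    (hfr : frontier Ω₀ ⊆ frontier Ω ∪ {x ∈ Ω | gradient u x = 0})
    (e : EuclideanSpace ℝ (Fin n))
    (he1 : ∀ p ∈ closure Ω₀ ∩ frontier Ω, 0 ≤ ⟪Du p, e⟫)
    (he2 : ∃ p ∈ closure Ω₀ ∩ frontier Ω, ⟪Du p, e⟫ ≠ 0)
    (hmeg : ModerateEnergyGrowth a u Ω₀) :
    ∀ x ∈ Ω₀, 0 < ⟪gradient u x, e⟫ :=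
  monotonicity_from_moderate_energy_growth_general hΩ.2.1 hΩ.2.2.1.isPreconnected ha hapos hlam hf
    hu2 hucl hDu hDuc hsol hstab hΩ₀o hΩ₀c.isPreconnected hΩ₀sub hfr he1 he2 hmeg
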